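/- arXiv:2010.07357 — 3 statements merged into one kernel-verified Lean document; each statement's English description precedes it below -/
import Mathlib

section
/- Fix x, y ∈ W_N and m ≥ 1. Let a(z) = ∏_{k=1}^{m−1}(1 − a_k/z)^{−1}, and let Q(x,u) = ∏_{j=1}^{N}∏_{k=1}^{m−1}(1 − a_k b_j) · det[B(i,j)]_{1≤i,j≤N} with B(i,j) = (1/2πi)∮_{|z|=R}(dz/z) (z b_j)^{u_j} (z b_i)^{−x_i} [∏_{k=1}^{j}(z−1/b_k)/∏_{k=1}^{i}(z−1/b_k)] a(z), R > max_k 1/b_k. Let p_k = a_m b_k and let P(u,y) = det[A(i,j)]_{1≤i,j≤N} be the one-step transition matrix, where A(i,j) = (1/2πi)∮_{|z|=R}(dz/z) (z p_j)^{y_j} (z p_i)^{−u_i} [∏_{k=1}^{j}(z−1/p_k)/∏_{k=1}^{i}(z−1/p_k)] (1−p_j)/(1−1/z), R > max_k 1/p_k. Then Σ_{u ∈ W_N} Q(x,u) P(u,y) = ∏_{j=1}^{N}∏_{k=1}^{m}(1 − a_k b_j) · det[K(i,j)]_{1≤i,j≤N}, where K(i,j) = (1/2πi)∮_{|z|=R}(dz/z)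 (z b_j)^{y_j} (z b_i)^{−x_i} [∏_{k=1}^{j}(z−1/b_k)/∏_{k=1}^{i}(z−1/b_k)] a(z)/(1 − a_m/z), R > max_k 1/b_k. -/
/-!
Every contour integral in the statement is a Laurent coefficient at infinity. On its circle each
integrand is a power of `z` times the value at `1/z` of a formal power series built from factors
`1 - X / b_k` and their inverses, so `contour_entry` turns the matrix entries into coefficients of
products of power series, and the three radii disappear. In the matrix of `P(u,y)` the
substitution `z ↦ a_m z` replaces `p_k = a_m b_k` by `b_k`. The scalar factors left over are pure
row and column factors: `b_j ^ u_j` and `b_j ^ (-u_j)` cancel between `Q(x,u)` and `P(u,y)`, the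
powers of `a_m` cancel inside `P(u,y)`, and the factors `1 - a_m b_j` complete the prefactor.

What remains is a sum over weakly ordered `u` of a product of two determinants in which `u_r` is
attached to the level `r`, that is, to the product `∏_{k ≤ r} (1 - X / b_k)` or its inverse. If all
levels were equal, the summand would be symmetric in `u` and would vanish when two coordinates
coincide, so the sum would be given by the Cauchy-Binet identity (`cauchyBinet_weak`). The levels
can be made equal: lowering the level of one row by one is a summation by parts in the
corresponding coordinate, whose boundary terms vanish because they contain a determinant with two
equal rows (`weylSum_step`). Carrying this out in a suitable order takes the levels `1, …, N` to
`0, …, 0` (`weylSum_levels`). At level zero each entry produced by Cauchy-Binet is a convolution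
of two coefficient sequences, that is, a coefficient of the product of the two power series
(`tsum_lcoeff_mul`), which is the entry of the matrix `K`.
-/

/-! ### Power series in `1/z` -/

/-- On the circle `‖z‖ = R` the function `φ` is the (convergent) sum of the power series `P`
evaluated at `1/z`. -/
def LaurentAt (R : ℝ) (φ : ℂ → ℂ) (P : PowerSeries ℂ) : Prop :=
  ∀ z : ℂ, ‖z‖ = R → HasSum (fun n : ℕ => PowerSeries.coeff n P * z⁻¹ ^ n) (φ z)

/-- The `n`-th coefficient of `P`, for an integer index: it is zero for `n < 0`. Thus
`lcoeff P n` is the coefficient of `z ^ (-n)` in `P(1/z)`. -/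
noncomputable def lcoeff (P : PowerSeries ℂ) (n : ℤ) : ℂ :=
  if 0 ≤ n then PowerSeries.coeff n.toNat P else 0

/-- The polynomial `1 - c X`, representing `z ↦ 1 - c / z`. -/
noncomputable def lin (c : ℂ) : PowerSeries ℂ := 1 - PowerSeries.C c * PowerSeries.X

/-- The geometric series `∑ c ^ n X ^ n`, representing `z ↦ (1 - c / z)⁻¹` for `‖c‖ < ‖z‖`. -/
noncomputable def geo (c : ℂ) : PowerSeries ℂ := PowerSeries.mk fun n => c ^ n

lemma lin_mul_geo (c : ℂ) : lin c * geo c = 1 := by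
  ext n
  rw [lin, sub_mul, one_mul, mul_assoc, map_sub, PowerSeries.coeff_C_mul]
  cases n with
  | zero => simp [geo]
  | succ n => simp [geo, PowerSeries.coeff_succ_X_mul, PowerSeries.coeff_one, pow_succ']

lemma lcoeff_of_neg (P : PowerSeries ℂ) {n : ℤ} (hn : n < 0) : lcoeff P n = 0 := by
  simp [lcoeff, hn]

lemma lcoeff_natCast (P : PowerSeries ℂ) (n : ℕ) : lcoeff P n = PowerSeries.coeff n P := by
  simp [lcoeff]

lemma lcoeff_lin_mul (c : ℂ) (P : PowerSeries ℂ) (n : ℤ) :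
    lcoeff (lin c * P) n = lcoeff P n - c * lcoeff P (n - 1) := by
  have h : lin c * P = P - PowerSeries.C c * (PowerSeries.X * P) := by
    rw [lin]; ring
  rcases lt_or_ge n 0 with hn | hn
  · rw [lcoeff_of_neg _ hn, lcoeff_of_neg _ hn, lcoeff_of_neg _ (by omega)]; simp
  · lift n to ℕ using hn
    cases n with
    | zero =>
      rw [lcoeff_natCast, lcoeff_natCast, lcoeff_of_neg _ (by norm_num), h]
      simp
    | succ n =>
      rw [lcoeff_natCast, lcoeff_natCast, show ((n + 1 : ℕ) : ℤ) - 1 = (n : ℕ) by push_cast; ring,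
        lcoeff_natCast, h, map_sub, PowerSeries.coeff_C_mul, PowerSeries.coeff_succ_X_mul]

/-- Multiplication of power series as a convolution over all of `ℤ`; only finitely many terms are
nonzero. -/
theorem tsum_lcoeff_mul (P Q : PowerSeries ℂ) (s t : ℤ) :
    ∑' n : ℤ, lcoeff P (n - s) * lcoeff Q (t - n) = lcoeff (P * Q) (t - s) := by
  rcases lt_or_ge (t - s) 0 with h | h
  · rw [lcoeff_of_neg _ h]
    refine (tsum_congr fun n => ?_).trans tsum_zero
    rcases lt_or_ge (n - s) 0 with h1 | h1
    · rw [lcoeff_of_neg _ h1, zero_mul]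
    · rw [lcoeff_of_neg Q (by omega), mul_zero]
  · obtain ⟨d, hd⟩ := Int.eq_ofNat_of_zero_le h
    rw [hd, lcoeff_natCast, PowerSeries.coeff_mul, Finset.Nat.sum_antidiagonal_eq_sum_range_succ
      (fun a b => PowerSeries.coeff a P * PowerSeries.coeff b Q)]
    let g : ℕ ↪ ℤ := ⟨fun k => (k : ℤ) + s, fun a b hab => by simpa using hab⟩
    have hg : ∀ k, g k = (k : ℤ) + s := fun _ => rfl
    rw [tsum_eq_sum (s := (Finset.range d.succ).map g)]
    · rw [Finset.sum_map]
      refine Finset.sum_congr rfl fun k hk => ?_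
      have hk' : k ≤ d := Nat.lt_succ_iff.1 (Finset.mem_range.1 hk)
      have e1 : g k - s = (k : ℕ) := by rw [hg]; ring
      have e2 : t - g k = ((d - k : ℕ) : ℤ) := by rw [hg]; omega
      rw [e1, e2, lcoeff_natCast, lcoeff_natCast]
    · intro n hn
      rcases lt_or_ge (n - s) 0 with h1 | h1
      · rw [lcoeff_of_neg _ h1, zero_mul]
      · rcases lt_or_ge (t - n) 0 with h2 | h2
        · rw [lcoeff_of_neg Q h2, mul_zero]
        · refine absurd (Finset.mem_map.2 ⟨(n - s).toNat, ?_, ?_⟩) hn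
          · rw [Finset.mem_range]; omega
          · rw [hg]; omega

lemma LaurentAt.mul {R : ℝ} {φ ψ : ℂ → ℂ} {P Q : PowerSeries ℂ}
    (hφ : LaurentAt R φ P) (hψ : LaurentAt R ψ Q) :
    LaurentAt R (fun z => φ z * ψ z) (P * Q) := by
  intro z hz
  have h1 := (hφ z hz).summable.norm
  have h2 := (hψ z hz).summable.norm
  have hs := (summable_norm_sum_mul_antidiagonal_of_summable_norm h1 h2).of_norm
  have ht := tsum_mul_tsum_eq_tsum_sum_antidiagonal_of_summable_norm h1 h2
  rw [(hφ z hz).tsum_eq, (hψ z hz).tsum_eq] at ht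
  change HasSum _ (φ z * ψ z)
  rw [ht]
  convert! hs.hasSum using 2 with n
  rw [PowerSeries.coeff_mul, Finset.sum_mul]
  refine Finset.sum_congr rfl fun kl hkl => ?_
  rw [← Finset.HasAntidiagonal.mem_antidiagonal.1 hkl, pow_add]
  ring

lemma LaurentAt.one (R : ℝ) : LaurentAt R (fun _ => 1) 1 := by
  intro z _
  convert! hasSum_single (f := fun n : ℕ => PowerSeries.coeff n (1 : PowerSeries ℂ) * z⁻¹ ^ n) 0 ?_
    using 1
  · simp
  · intro n hn
    simp [PowerSeries.coeff_one, hn]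

lemma LaurentAt.prod {R : ℝ} {ι : Type*} (s : Finset ι) (φ : ι → ℂ → ℂ) (P : ι → PowerSeries ℂ)
    (h : ∀ i ∈ s, LaurentAt R (φ i) (P i)) :
    LaurentAt R (fun z => ∏ i ∈ s, φ i z) (∏ i ∈ s, P i) := by
  classical
  induction s using Finset.induction_on with
  | empty => simpa using LaurentAt.one R
  | insert i s hi ih =>
    simp only [Finset.prod_insert hi]
    exact (h i (Finset.mem_insert_self i s)).mul
      (ih fun k hk => h k (Finset.mem_insert_of_mem hk))

lemma LaurentAt.one_sub_div (R : ℝ) (c : ℂ) : LaurentAt R (fun z => 1 - c / z) (lin c) := by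
  intro z _
  have h : ∀ n ∉ Finset.range 2, PowerSeries.coeff n (lin c) * z⁻¹ ^ n = 0 := by
    intro n hn
    have h2 : 2 ≤ n := by
      rw [Finset.mem_range] at hn
      omega
    obtain ⟨m, rfl⟩ : ∃ m, n = m + 2 := ⟨n - 2, by omega⟩
    simp [lin, PowerSeries.coeff_one]
  have hs := hasSum_sum_of_ne_finset_zero h (L := .unconditional ℕ)
  convert! hs using 1
  simp [Finset.sum_range_succ, lin, PowerSeries.coeff_one,
    div_eq_mul_inv, sub_eq_add_neg]

lemma LaurentAt.inv_one_sub_div {R : ℝ} {c : ℂ} (hc : ‖c‖ < R) :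
    LaurentAt R (fun z => (1 - c / z)⁻¹) (geo c) := by
  intro z hz
  have : ‖c / z‖ < 1 := by
    rw [norm_div, hz, div_lt_one ((norm_nonneg c).trans_lt hc)]
    exact hc
  convert! hasSum_geometric_of_norm_lt_one this using 2 with n
  simp [geo, div_eq_mul_inv, mul_pow]

/-- The contour integral against `w ^ n dw / w`, with `w = α z`, extracts the `n`-th coefficient.
The scaling `α` serves the one-step matrix, whose parameters are `a_m b_k` instead of `b_k`. The
expansion converges on one circle only, so it is integrated term by term by dominated
convergence. -/
theorem LaurentAt.circleIntegral_eq {R : ℝ} (hR : 0 < R) {α : ℂ} (hα : α ≠ 0) {φ : ℂ → ℂ}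
    {P : PowerSeries ℂ} (h : LaurentAt (‖α‖ * R) φ P) (n : ℤ) :
    (∮ z in C(0, R), z⁻¹ * ((α * z) ^ n * φ (α * z)))
      = 2 * (Real.pi : ℂ) * Complex.I * lcoeff P n := by
  have hα' : 0 < ‖α‖ := norm_pos_iff.2 hα
  have hsum : HasSum (fun k : ℕ => ∮ z in C(0, R),
      z⁻¹ * ((α * z) ^ n * (PowerSeries.coeff k P * (α * z)⁻¹ ^ k)))
      (∮ z in C(0, R), z⁻¹ * ((α * z) ^ n * φ (α * z))) := by
    have hb : Summable fun k : ℕ =>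
        ‖PowerSeries.coeff k P‖ * (‖α‖ * R)⁻¹ ^ k := by
      have := (h ((‖α‖ * R : ℝ) : ℂ) (by
        rw [Complex.norm_real, Real.norm_of_nonneg (by positivity)])).summable.norm
      refine this.congr fun k => ?_
      rw [norm_mul, norm_pow, norm_inv, Complex.norm_real, Real.norm_of_nonneg (by positivity)]
    refine intervalIntegral.hasSum_integral_of_dominated_convergence
      (fun k _ => (‖α‖ * R) ^ n * (‖PowerSeries.coeff k P‖ * (‖α‖ * R)⁻¹ ^ k))
      (fun k => ?_) (fun k => ?_) ?_ ?_ ?_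
    · apply Continuous.aestronglyMeasurable
      have h0 : ∀ θ, circleMap 0 R θ ≠ 0 := fun θ => circleMap_ne_center hR.ne'
      have h1 : ∀ θ, α * circleMap 0 R θ ≠ 0 := fun θ => mul_ne_zero hα (h0 θ)
      have hc : Continuous (circleMap 0 R) := continuous_circleMap 0 R
      simp only [deriv_circleMap, smul_eq_mul]
      refine (hc.mul continuous_const).mul ((hc.inv₀ h0).mul
        (((continuous_const.mul hc).zpow₀ n fun θ => Or.inl (h1 θ)).mul
          (continuous_const.mul (((continuous_const.mul hc).inv₀ h1).pow k))))
    · refine Filter.Eventually.of_forall fun θ _ => le_of_eq ?_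
      simp only [deriv_circleMap, smul_eq_mul, norm_mul, norm_inv, norm_zpow, norm_pow,
        norm_circleMap_zero, abs_of_pos hR, Complex.norm_I, mul_one]
      field_simp
    · exact Filter.Eventually.of_forall fun θ _ => hb.mul_left _
    · exact intervalIntegrable_const
    · refine Filter.Eventually.of_forall fun θ _ => ?_
      refine HasSum.const_smul _ (HasSum.mul_left _ (HasSum.mul_left _ (h _ ?_)))
      simp [abs_of_pos hR]
  have hterm : ∀ k : ℕ, (∮ z in C(0, R),
      z⁻¹ * ((α * z) ^ n * (PowerSeries.coeff k P * (α * z)⁻¹ ^ k)))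
      = if (k : ℤ) = n then 2 * (Real.pi : ℂ) * Complex.I * PowerSeries.coeff k P else 0 := by
    intro k
    have e : (∮ z in C(0, R), z⁻¹ * ((α * z) ^ n * (PowerSeries.coeff k P * (α * z)⁻¹ ^ k)))
        = ∮ z in C(0, R), (PowerSeries.coeff k P * α ^ (n - k)) * (z - 0) ^ (n - k - 1) := by
      refine circleIntegral.integral_congr hR.le fun z hz => ?_
      have hz0 : z ≠ 0 := by
        rintro rfl
        simp at hz
        exact hR.ne hz
      simp only [sub_zero]
      rw [zpow_sub₀ hz0, zpow_sub₀ hz0, zpow_sub₀ hα, mul_zpow, inv_pow, mul_pow]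
      simp only [zpow_natCast, zpow_one]
      field_simp
    rw [e, circleIntegral.integral_const_mul]
    split_ifs with hk
    · subst hk
      have : (∮ z in C(0, R), (z - 0) ^ ((k : ℤ) - k - 1)) = 2 * (Real.pi : ℂ) * Complex.I := by
        rw [← circleIntegral.integral_sub_center_inv (0 : ℂ) hR.ne']
        simp
      rw [this]
      simp
      ring
    · rw [circleIntegral.integral_sub_zpow_of_ne (by omega), mul_zero]
  simp only [hterm] at hsum
  refine hsum.unique ?_
  rcases lt_or_ge n 0 with hn | hn
  · rw [lcoeff_of_neg _ hn, mul_zero]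
    convert! hasSum_zero using 2 with k
    rw [if_neg (by omega)]
  · lift n to ℕ using hn
    rw [lcoeff_natCast]
    have := hasSum_single (f := fun k : ℕ => if (k : ℤ) = (n : ℤ) then
      2 * (Real.pi : ℂ) * Complex.I * PowerSeries.coeff k P else 0) n fun k hk =>
        if_neg (by exact_mod_cast hk)
    simpa using this

/-! ### Matrix entries as Laurent coefficients -/

lemma prod_Icc_eq_prod_range (f : ℕ → ℂ) (n : ℕ) :
    ∏ k ∈ Finset.Icc 1 n, f k = ∏ k ∈ Finset.range n, f (k + 1) := by
  induction n with
  | zero => simp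
  | succ n ih => rw [Finset.prod_Icc_succ_top (by omega), ih, Finset.prod_range_succ]

lemma det_scale {N : ℕ} (f g : Fin N → ℂ) (M : Fin N → Fin N → ℂ) :
    Matrix.det (Matrix.of fun i j => f i * g j * M i j)
      = (∏ i, f i) * (∏ j, g j) * Matrix.det (Matrix.of fun i j => M i j) := by
  have h := Matrix.det_mul_column f (Matrix.of fun i j => g j * M i j)
  have h' := Matrix.det_mul_row g (Matrix.of fun i j => M i j)
  simp only [Matrix.of_apply] at h h'
  rw [mul_assoc, ← h', ← h]
  simp only [mul_assoc]

/-- `∏_{l=1}^{k} (1 - X / b_l)`: up to the factor `z ^ k`, the product `∏_{l=1}^{k} (z - 1 / b_l)`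
expanded in `1/z`. -/
noncomputable def numer (b : ℕ → ℂ) (k : ℕ) : PowerSeries ℂ :=
  ∏ l ∈ Finset.range k, lin (b (l + 1))⁻¹

/-- The inverse of `numer b k`, as a product of geometric series. -/
noncomputable def denom (b : ℕ → ℂ) (k : ℕ) : PowerSeries ℂ :=
  ∏ l ∈ Finset.range k, geo (b (l + 1))⁻¹

lemma numer_succ (b : ℕ → ℂ) (k : ℕ) : numer b (k + 1) = lin (b (k + 1))⁻¹ * numer b k := by
  rw [numer, numer, Finset.prod_range_succ, mul_comm]

lemma denom_eq (b : ℕ → ℂ) (k : ℕ) : denom b k = lin (b (k + 1))⁻¹ * denom b (k + 1) := by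
  rw [denom, denom, Finset.prod_range_succ, mul_left_comm, lin_mul_geo, mul_one]

lemma prod_sub_eq (b : ℕ → ℂ) (n : ℕ) {α z : ℂ} (hα : α ≠ 0) (hz : z ≠ 0) :
    ∏ k ∈ Finset.Icc 1 n, (z - (α * b k)⁻¹)
      = z ^ n * ∏ k ∈ Finset.range n, (1 - (b (k + 1))⁻¹ / (α * z)) := by
  rw [prod_Icc_eq_prod_range]
  have hzn : z ^ n = ∏ _k ∈ Finset.range n, z := by simp
  rw [hzn, ← Finset.prod_mul_distrib]
  refine Finset.prod_congr rfl fun k _ => ?_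
  rw [mul_sub, mul_inv]
  field_simp

/-- The common form of the entries of all three matrices: after `w = α z`, an entry is a row factor
times a column factor times a Laurent coefficient that does not depend on `α` or on the radius.
The matrices `B` and `K` use `α = κ = 1`; the matrix `A` uses `α = a_m` and
`κ = 1 - a_m b_j`. -/
theorem contour_entry {R : ℝ} (hR : 0 < R) {α : ℂ} (hα : α ≠ 0) (b : ℕ → ℂ) (κ : ℂ) {φ : ℂ → ℂ}
    {P : PowerSeries ℂ} (hφ : LaurentAt (‖α‖ * R) φ P) (i j : ℕ) (hi : b i ≠ 0) (hj : b j ≠ 0)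
    (hb : ∀ k, 1 ≤ k → k ≤ i → ‖(b k)⁻¹‖ < ‖α‖ * R) (s t : ℤ) :
    (2 * (Real.pi : ℂ) * Complex.I)⁻¹ *
      (∮ z in C(0, R), z⁻¹ * (z * (α * b j)) ^ s * (z * (α * b i)) ^ (-t)
        * ((∏ k ∈ Finset.Icc 1 j, (z - (α * b k)⁻¹)) / ∏ k ∈ Finset.Icc 1 i, (z - (α * b k)⁻¹))
        * (κ * φ (α * z)))
      = (b i ^ (-t) * α ^ (i : ℤ)) * (κ * b j ^ s * α ^ (-(j : ℤ)))
        * lcoeff (numer b j * denom b i * P) (s - t + (j - i)) := by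
  have h1 : LaurentAt (‖α‖ * R)
      (fun z => (∏ k ∈ Finset.range j, (1 - (b (k + 1))⁻¹ / z))
        * (∏ k ∈ Finset.range i, (1 - (b (k + 1))⁻¹ / z)⁻¹) * φ z)
      (numer b j * denom b i * P) := by
    refine LaurentAt.mul (LaurentAt.mul ?_ ?_) hφ
    · exact LaurentAt.prod _ (fun k z => 1 - (b (k + 1))⁻¹ / z) _
        fun k _ => LaurentAt.one_sub_div _ _
    · refine LaurentAt.prod _ (fun k z => (1 - (b (k + 1))⁻¹ / z)⁻¹) _ fun k hk => ?_
      have := Finset.mem_range.1 hk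
      exact LaurentAt.inv_one_sub_div (hb _ (by omega) (by omega))
  have h2 := h1.circleIntegral_eq hR hα (s - t + (j - i))
  have h3 : ∀ z ∈ Metric.sphere (0 : ℂ) R,
      z⁻¹ * (z * (α * b j)) ^ s * (z * (α * b i)) ^ (-t)
        * ((∏ k ∈ Finset.Icc 1 j, (z - (α * b k)⁻¹)) / ∏ k ∈ Finset.Icc 1 i, (z - (α * b k)⁻¹))
        * (κ * φ (α * z))
      = ((b i ^ (-t) * α ^ (i : ℤ)) * (κ * b j ^ s * α ^ (-(j : ℤ)))) *
        (z⁻¹ * ((α * z) ^ (s - t + (j - i)) *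
          ((∏ k ∈ Finset.range j, (1 - (b (k + 1))⁻¹ / (α * z)))
        * (∏ k ∈ Finset.range i, (1 - (b (k + 1))⁻¹ / (α * z))⁻¹) * φ (α * z)))) := by
    intro z hz
    have hz0 : z ≠ 0 := by
      rintro rfl
      simp at hz
      exact hR.ne hz
    have hαz := mul_ne_zero hα hz0
    rw [prod_sub_eq b j hα hz0, prod_sub_eq b i hα hz0, Finset.prod_inv_distrib,
      show z * (α * b j) = (α * z) * b j by ring, show z * (α * b i) = (α * z) * b i by ring,
      mul_zpow, mul_zpow (α * z) (b i),
      show s - t + (j - i) = s + (-t) + ((j : ℤ) + -(i : ℤ)) by ring,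
      zpow_add₀ hαz, zpow_add₀ hαz, mul_zpow α z (_ + _), zpow_add₀ hα, zpow_add₀ hz0]
    simp only [zpow_neg, zpow_natCast, div_eq_mul_inv, mul_inv]
    have e1 := mul_inv_cancel₀ (pow_ne_zero i hα)
    have e2 := mul_inv_cancel₀ (pow_ne_zero j hα)
    generalize (α ^ i)⁻¹ = x at *
    generalize (α ^ j)⁻¹ = y at *
    generalize α ^ i = x' at *
    generalize α ^ j = y' at *
    generalize (∏ k ∈ Finset.range j, _ : ℂ) = p
    generalize (∏ k ∈ Finset.range i, _ : ℂ)⁻¹ = q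
    generalize (z ^ i)⁻¹ = z1
    generalize z ^ j = z2
    generalize ((α * z) ^ t)⁻¹ = w1
    generalize (α * z) ^ s = w2
    linear_combination (-z⁻¹ * w2 * b j ^ s * w1 * (b i ^ t)⁻¹ * z2 * z1 * p * q * κ * φ (α * z))
      * (e1 + (x' * x) * (e2 ))
  rw [circleIntegral.integral_congr hR.le h3, circleIntegral.integral_const_mul, h2]
  have : (2 * (Real.pi : ℂ) * Complex.I) ≠ 0 := Complex.two_pi_I_ne_zero
  field_simp

/-! ### Determinants indexed by ordered tuples, and Cauchy-Binet -/

/-- The determinant with `(r, s)` entry `A (l r) s (u r)`. Here `A k s n` is a function of the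
position `n`, taken at the level `k`; the row `r` carries the level `l r` and the position `u r`,
while `s` labels the column. -/
noncomputable def rowDet {N : ℕ} (A : ℕ → Fin N → ℤ → ℂ) (l : Fin N → ℕ) (u : Fin N → ℤ) : ℂ :=
  Matrix.det (Matrix.of fun r s : Fin N => A (l r) s (u r))

/-- Two rows with the same level and the same position make the determinant vanish. -/
lemma rowDet_eq_zero_of_eq {N : ℕ} (A : ℕ → Fin N → ℤ → ℂ) (l : Fin N → ℕ) (u : Fin N → ℤ)
    {i j : Fin N} (hij : i ≠ j) (hl : l i = l j) (hu : u i = u j) : rowDet A l u = 0 := by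
  refine Matrix.det_zero_of_row_eq hij ?_
  ext s
  simp [hl, hu]

lemma rowDet_eq_zero_of_row {N : ℕ} (A : ℕ → Fin N → ℤ → ℂ) (l : Fin N → ℕ) (u : Fin N → ℤ)
    (r : Fin N) (h : ∀ s, A (l r) s (u r) = 0) : rowDet A l u = 0 :=
  Matrix.det_eq_zero_of_row_eq_zero r (by simpa using h)

/-- Linearity of the determinant in the row `j`, for matrices that agree in all other rows. -/
lemma det_eq_sub_of_row {N : ℕ} (M M₁ M₂ : Matrix (Fin N) (Fin N) ℂ) (j : Fin N) (c : ℂ)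
    (h₁ : ∀ r, r ≠ j → M₁ r = M r) (h₂ : ∀ r, r ≠ j → M₂ r = M r)
    (hj : ∀ s, M j s = M₁ j s - c * M₂ j s) : M.det = M₁.det - c * M₂.det := by
  have e₁ : M₁ = M.updateRow j (M₁ j) := by
    ext r s
    by_cases hr : r = j
    · subst hr; simp
    · simp [hr, h₁ r hr]
  have e₂ : M₂ = M.updateRow j (M₂ j) := by
    ext r s
    by_cases hr : r = j
    · subst hr; simp
    · simp [hr, h₂ r hr]
  have e : M = M.updateRow j (M₁ j + (-c) • M₂ j) := by
    ext r s
    by_cases hr : r = j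
    · subst hr; simp [hj, sub_eq_add_neg]
    · simp [hr]
  rw [e, Matrix.det_updateRow_add, Matrix.det_updateRow_smul, ← e₁, ← e₂]
  ring

/-- The Cauchy-Binet identity at level zero, with the sum over weakly increasing tuples. Tuples with
a repeated coordinate contribute zero, so the weak order gives the same sum as the strict one. -/
theorem cauchyBinet_weak {N : ℕ} (A B : ℕ → Fin N → ℤ → ℂ)
    (L M : ℤ) (hA : ∀ i, ∀ n < L, A 0 i n = 0) (hB : ∀ i, ∀ n, M < n → B 0 i n = 0) :
    ∑' u : Fin N → ℤ, {u | Monotone u}.indicator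
        (fun u => rowDet A (fun _ => 0) u * rowDet B (fun _ => 0) u) u
      = Matrix.det (Matrix.of fun i j : Fin N => ∑' n : ℤ, A 0 i n * B 0 j n) := by
  classical
  set I : Finset ℤ := Finset.Icc L M with hI
  set h : (Fin N → ℤ) → ℂ := fun v => rowDet A (fun _ => 0) v * ∏ r, B 0 r (v r) with hh
  -- Expanding the second determinant turns the summand into a sum of `h` over rearrangements of `u`.
  have hsymm : ∀ u : Fin N → ℤ, rowDet A (fun _ => 0) u * rowDet B (fun _ => 0) u
      = ∑ σ : Equiv.Perm (Fin N), h (u ∘ σ) := by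
    intro u
    conv_lhs => rw [rowDet.eq_def B, Matrix.det_apply']
    rw [Finset.mul_sum]
    refine Finset.sum_congr rfl fun σ _ => ?_
    have : rowDet A (fun _ => 0) (u ∘ σ)
        = (Equiv.Perm.sign σ : ℤ) * rowDet A (fun _ => 0) u := by
      unfold rowDet
      rw [← Matrix.det_permute]
      rfl
    simp only [hh, this, Matrix.of_apply, Function.comp]
    ring
  have hinj : ∀ v, ¬ Function.Injective v → h v = 0 := by
    intro v hv
    simp only [Function.Injective, not_forall] at hv
    obtain ⟨i, j, hvij, hij⟩ := hv
    simp [hh, rowDet_eq_zero_of_eq A (fun _ => 0) v hij rfl hvij]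
  -- An injective tuple has exactly one increasing rearrangement.
  have hcount : ∀ v : Fin N → ℤ,
      ∑ σ : Equiv.Perm (Fin N), (if Monotone (v ∘ σ) then h v else 0) = h v := by
    intro v
    by_cases hv : Function.Injective v
    · rw [Finset.sum_eq_single (Tuple.sort v)]
      · rw [if_pos (Tuple.monotone_sort v)]
      · intro σ _ hσ
        rw [if_neg]
        intro hm
        apply hσ
        have := Tuple.unique_monotone hm (Tuple.monotone_sort v)
        ext r
        exact congrArg Fin.val (hv (congrFun this r))
      · simp
    · simp [hinj v hv]
  rw [tsum_eq_sum (s := Fintype.piFinset fun _ : Fin N => I)]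
  · have e1 : ∀ u : Fin N → ℤ, {u | Monotone u}.indicator
        (fun u => rowDet A (fun _ => 0) u * rowDet B (fun _ => 0) u) u
        = ∑ σ : Equiv.Perm (Fin N), if Monotone u then h (u ∘ σ) else 0 := by
      intro u
      by_cases hu : Monotone u
      · simp [hu, hsymm]
      · simp [hu]
    simp only [e1]
    rw [Finset.sum_comm]
    have e2 : ∀ σ : Equiv.Perm (Fin N),
        (∑ u ∈ Fintype.piFinset fun _ : Fin N => I, if Monotone u then h (u ∘ σ) else 0)
        = ∑ v ∈ Fintype.piFinset fun _ : Fin N => I,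
            if Monotone (v ∘ (σ⁻¹ : Equiv.Perm (Fin N))) then h v else 0 := by
      intro σ
      refine Finset.sum_equiv (Equiv.arrowCongr σ⁻¹ (Equiv.refl ℤ)) ?_ ?_
      · intro u
        simp only [Fintype.mem_piFinset, Equiv.arrowCongr_apply, Function.comp, Equiv.refl_apply]
        constructor
        · intro H r; exact H _
        · intro H r
          have := H ((σ⁻¹ : Equiv.Perm (Fin N)) r)
          rwa [Equiv.symm_apply_apply] at this
      · intro u _
        have : (Equiv.arrowCongr σ⁻¹ (Equiv.refl ℤ)) u = u ∘ σ := by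
          ext r; simp [Equiv.arrowCongr_apply]; rfl
        rw [this]
        congr 1
        have : (u ∘ σ) ∘ (σ⁻¹ : Equiv.Perm (Fin N)) = u := by
          ext r; simp
        rw [this]
    have e2' := Equiv.sum_comp (Equiv.inv (Equiv.Perm (Fin N))) fun σ : Equiv.Perm (Fin N) =>
      ∑ v ∈ Fintype.piFinset fun _ : Fin N => I, if Monotone (v ∘ σ) then h v else 0
    simp only [Equiv.inv_apply] at e2'
    rw [Finset.sum_congr rfl fun σ _ => e2 σ, e2',
      Finset.sum_comm]
    simp only [hcount]
    have e3 : ∀ i j, ∑' n : ℤ, A 0 i n * B 0 j n = ∑ n ∈ I, A 0 i n * B 0 j n := by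
      intro i j
      refine tsum_eq_sum fun n hn => ?_
      simp only [hI, Finset.mem_Icc, not_and_or, not_le] at hn
      rcases hn with hn | hn
      · simp [hA i n hn]
      · simp [hB j n hn]
    simp only [e3]
    rw [← Matrix.det_transpose]
    have e4 : (Matrix.of fun i j : Fin N => ∑ n ∈ I, A 0 i n * B 0 j n).transpose
        = fun j => ∑ n ∈ I, B 0 j n • (fun i => A 0 i n) := by
      ext j i
      simp [Matrix.transpose_apply, Finset.sum_apply, mul_comm]
    rw [e4]
    change _ = Matrix.detRowAlternating.toMultilinearMap _
    -- Each row is a sum over `n ∈ I`; multilinearity expands the determinant over all of `I ^ N`.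
    rw [MultilinearMap.map_sum_finset]
    refine Finset.sum_congr rfl fun v _ => ?_
    rw [MultilinearMap.map_smul_univ]
    simp only [hh, smul_eq_mul]
    rw [mul_comm]
    rfl
  · intro u hu
    simp only [Fintype.mem_piFinset, not_forall, hI, Finset.mem_Icc, not_and_or, not_le] at hu
    obtain ⟨r, hr | hr⟩ := hu
    · have := rowDet_eq_zero_of_row A (fun _ => 0) u r (fun s => hA s _ hr)
      simp [Set.indicator, this]
    · have := rowDet_eq_zero_of_row B (fun _ => 0) u r (fun s => hB s _ hr)
      simp [Set.indicator, this]

/-! ### Summation by parts over ordered tuples -/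

/-- The sum over weakly increasing tuples `u` of `rowDet A l u * rowDet B l u`, where both
determinants use the same levels `l`. -/
noncomputable def weylSum {N : ℕ} (A B : ℕ → Fin N → ℤ → ℂ) (l : Fin N → ℕ) : ℂ :=
  ∑' u : Fin N → ℤ, {u | Monotone u}.indicator (fun u => rowDet A l u * rowDet B l u) u

lemma finite_box {N : ℕ} (L M : ℤ) : {u : Fin N → ℤ | ∀ r, L ≤ u r ∧ u r ≤ M}.Finite := by
  refine (Set.finite_Icc (fun _ : Fin N => L) (fun _ => M)).subset ?_
  intro u hu
  exact ⟨fun r => (hu r).1, fun r => (hu r).2⟩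

/-- Summation by parts in the coordinate `j`, lowering the level of the row `j` from `k + 1` to `k`.
The hypothesis on the preceding row makes the determinants of `A` vanish when `u` meets the wall
`u_{j-1} = u_j` after the change of level, and the hypothesis on the following row makes those of
`B` vanish at the wall `u_j = u_{j+1}` before it; these are the only two boundary terms. -/
theorem weylSum_step {N : ℕ} (A B : ℕ → Fin N → ℤ → ℂ) (c : ℕ → ℂ)
    (hA : ∀ k i n, A (k + 1) i n = A k i (n + 1) - c k * A k i n)
    (hB : ∀ k i n, B k i n = B (k + 1) i (n - 1) - c k * B (k + 1) i n)
    (hAL : ∀ k, ∃ L, ∀ i, ∀ n < L, A k i n = 0)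
    (hBM : ∀ k, ∃ M, ∀ i, ∀ n, M < n → B k i n = 0)
    (l : Fin N → ℕ) (j : Fin N) (k : ℕ) (hj : l j = k + 1)
    (hprev : ∀ i : Fin N, i.1 + 1 = j.1 → l i = k)
    (hnext : ∀ i : Fin N, i.1 = j.1 + 1 → l i = k + 1) :
    weylSum A B l = weylSum A B (Function.update l j k) := by
  classical
  set l' := Function.update l j k with hl'
  have hl'j : l' j = k := by simp [hl']
  have hl'r : ∀ r, r ≠ j → l' r = l r := fun r hr => by simp [hl', hr]
  set e : Fin N → ℤ := Pi.single j 1 with he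
  have hej : e j = 1 := by simp [he]
  have her : ∀ r, r ≠ j → e r = 0 := fun r hr => by simp [he, hr]
  have dA : ∀ u, rowDet A l u = rowDet A l' (u + e) - c k * rowDet A l' u := by
    intro u
    refine det_eq_sub_of_row _ _ _ j _ ?_ ?_ ?_
    · intro r hr; ext s; simp [hl'r r hr, her r hr]
    · intro r hr; ext s; simp [hl'r r hr]
    · intro s; simp [hl'j, hj, hej, hA]
  have dB : ∀ u, rowDet B l' u = rowDet B l (u - e) - c k * rowDet B l u := by
    intro u
    refine det_eq_sub_of_row _ _ _ j _ ?_ ?_ ?_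
    · intro r hr; ext s; simp [hl'r r hr, her r hr]
    · intro r hr; ext s; simp [hl'r r hr]
    · intro s; simp [hl'j, hj, hej, hB k s (u j)]
  choose L hL using hAL
  choose M hM using hBM
  -- Bounds uniform over the rows, so that all sums below have finite support.
  obtain ⟨L₀, hL₀⟩ : ∃ L₀, ∀ r, L₀ ≤ L (l' r) := by
    obtain ⟨b, hb⟩ := (Set.finite_range fun r => L (l' r)).bddBelow
    exact ⟨b, fun r => hb ⟨r, rfl⟩⟩
  obtain ⟨M₀, hM₀⟩ : ∃ M₀, ∀ r, M (l r) ≤ M₀ := by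
    obtain ⟨b, hb⟩ := (Set.finite_range fun r => M (l r)).bddAbove
    exact ⟨b, fun r => hb ⟨r, rfl⟩⟩
  have zA : ∀ u r, u r < L₀ → rowDet A l' u = 0 := fun u r hr =>
    rowDet_eq_zero_of_row A l' u r fun s => hL _ _ _ (hr.trans_le (hL₀ r))
  have zB : ∀ u r, M₀ < u r → rowDet B l u = 0 := fun u r hr =>
    rowDet_eq_zero_of_row B l u r fun s => hM _ _ _ ((hM₀ r).trans_lt hr)
  set W : Set (Fin N → ℤ) := {u | Monotone u} with hW
  set g : (Fin N → ℤ) → ℂ := fun u => rowDet A l' (u + e) * rowDet B l u with hg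
  set g₀ : (Fin N → ℤ) → ℂ := fun u => c k * (rowDet A l' u * rowDet B l u) with hg₀
  have hgs : (Function.support g).Finite := by
    refine (finite_box (N := N) (L₀ - 1) M₀).subset fun u hu r => ?_
    by_contra hcon
    rw [not_and_or, not_le, not_le] at hcon
    apply hu
    rcases hcon with h | h
    · have : (u + e) r < L₀ := by
        by_cases hr : r = j
        · subst hr; simp only [Pi.add_apply, hej]; omega
        · simp only [Pi.add_apply, her r hr]; omega
      simp [hg, zA _ r this]
    · simp [hg, zB _ r h]
  have hg₀s : (Function.support g₀).Finite := by
    refine (finite_box (N := N) L₀ M₀).subset fun u hu r => ?_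
    by_contra hcon
    rw [not_and_or, not_le, not_le] at hcon
    apply hu
    rcases hcon with h | h
    · simp [hg₀, zA _ r h]
    · simp [hg₀, zB _ r h]
  have sg : Summable (W.indicator g) :=
    summable_of_hasFiniteSupport (hgs.subset (by simp [Set.support_indicator]))
  have sg₀ : Summable (W.indicator g₀) :=
    summable_of_hasFiniteSupport (hg₀s.subset (by simp [Set.support_indicator]))
  -- Where `g u ≠ 0`, the tuple `u` is ordered exactly when `u + e` is, so shifting the summation
  -- variable by `e` produces no boundary term.
  have hbd : ∀ u, W.indicator g u = W.indicator (fun v => g (v - e)) (u + e) := by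
    intro u
    by_cases h0 : g u = 0
    · simp [Set.indicator, h0]
    have hA0 : rowDet A l' (u + e) ≠ 0 := fun h => h0 (by simp [hg, h])
    have hB0 : rowDet B l u ≠ 0 := fun h => h0 (by simp [hg, h])
    have hiff : u ∈ W ↔ u + e ∈ W := by
      simp only [hW, Set.mem_ofPred_eq]
      constructor
      · intro hm p q hpq
        rcases eq_or_ne p j with hp | hp
        · rcases eq_or_ne q j with hq | hq
          · rw [hp, hq]
          subst hp
          have hlt : p.1 < q.1 := lt_of_le_of_ne hpq fun h => hq (Fin.ext h.symm)
          let q' : Fin N := ⟨p.1 + 1, by omega⟩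
          have hq'p : p ≠ q' := fun h => by
            have := congrArg Fin.val h; simp [q'] at this
          have h1 : u p ≤ u q' := hm (by simp [Fin.le_def, q'])
          have h2 : u q' ≤ u q := hm (by simp only [Fin.le_def, q']; omega)
          -- Equality would give `B` two equal rows at level `k + 1`.
          have h3 : u p ≠ u q' := fun h =>
            hB0 (rowDet_eq_zero_of_eq B l u hq'p (by rw [hj, hnext q' rfl]) h)
          simp only [Pi.add_apply, hej, her q hq]
          omega
        · have h1 := hm hpq
          have h2 : 0 ≤ e q := by
            rcases eq_or_ne q j with hq | hq
            · rw [hq, hej]; norm_num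
            · rw [her q hq]
          simp only [Pi.add_apply, her p hp]
          omega
      · intro hm p q hpq
        rcases eq_or_ne q j with hq | hq
        · rcases eq_or_ne p j with hp | hp
          · rw [hp, hq]
          subst hq
          have hlt : p.1 < q.1 := lt_of_le_of_ne hpq fun h => hp (Fin.ext h)
          let p' : Fin N := ⟨q.1 - 1, by omega⟩
          have hp'1 : p'.1 + 1 = q.1 := by simp only [p']; omega
          have hp'q : p' ≠ q := fun h => by
            have := congrArg Fin.val h; omega
          have h1 : (u + e) p' ≤ (u + e) q := hm (by simp only [Fin.le_def]; omega)
          have h2 : (u + e) p ≤ (u + e) p' := hm (by simp only [Fin.le_def]; omega)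
          -- Equality would give `A` two equal rows at level `k`.
          have h3 : (u + e) p' ≠ (u + e) q := fun h =>
            hA0 (rowDet_eq_zero_of_eq A l' (u + e) hp'q
              (by rw [hl'j, hl'r _ hp'q, hprev p' hp'1]) h)
          simp only [Pi.add_apply, hej, her p hp, her p' hp'q] at h1 h2 h3
          omega
        · have h1 := hm hpq
          have h2 : 0 ≤ e p := by
            rcases eq_or_ne p j with hp | hp
            · rw [hp, hej]; norm_num
            · rw [her p hp]
          simp only [Pi.add_apply, her q hq] at h1
          omega
    by_cases hu : u ∈ W
    · rw [Set.indicator_of_mem hu, Set.indicator_of_mem (hiff.1 hu)]; simp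
    · rw [Set.indicator_of_notMem hu, Set.indicator_of_notMem (fun h => hu (hiff.2 h))]
  have sg' : Summable (W.indicator fun v => g (v - e)) := by
    rw [← (Equiv.addRight e).summable_iff]
    refine sg.congr fun u => ?_
    exact hbd u
  have e1 : weylSum A B l = ∑' u, (W.indicator g u - W.indicator g₀ u) := by
    refine tsum_congr fun u => ?_
    change W.indicator (fun u => rowDet A l u * rowDet B l u) u = _
    by_cases hu : u ∈ W
    · simp only [Set.indicator_of_mem hu, dA, hg, hg₀]; ring
    · simp only [Set.indicator_of_notMem hu, sub_zero]
  have e2 : weylSum A B l' = ∑' u, (W.indicator (fun v => g (v - e)) u - W.indicator g₀ u) := by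
    refine tsum_congr fun u => ?_
    change W.indicator (fun u => rowDet A l' u * rowDet B l' u) u = _
    by_cases hu : u ∈ W
    · simp only [Set.indicator_of_mem hu, dB, hg, hg₀, sub_add_cancel]; ring
    · simp only [Set.indicator_of_notMem hu, sub_zero]
  rw [e1, e2, sg.tsum_sub sg₀, sg'.tsum_sub sg₀,
    ← (Equiv.addRight e).tsum_eq (W.indicator fun v => g (v - e))]
  congr 1
  exact tsum_congr hbd

/-- The levels `1, …, N` can all be lowered to `0`. In each round the rows are lowered by one from
the last to the first, skipping those already at level zero, so that a row is lowered from `k + 1`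
to `k` when the following row is already at `k + 1` and the preceding row is still at `k`. -/
theorem weylSum_levels {N : ℕ} (A B : ℕ → Fin N → ℤ → ℂ) (c : ℕ → ℂ)
    (hA : ∀ k i n, A (k + 1) i n = A k i (n + 1) - c k * A k i n)
    (hB : ∀ k i n, B k i n = B (k + 1) i (n - 1) - c k * B (k + 1) i n)
    (hAL : ∀ k, ∃ L, ∀ i, ∀ n < L, A k i n = 0)
    (hBM : ∀ k, ∃ M, ∀ i, ∀ n, M < n → B k i n = 0) :
    weylSum A B (fun i => i.1 + 1) = weylSum A B (fun _ => 0) := by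
  -- `lev r s`: after `r` complete rounds, the rows with index at least `s` have also been lowered in
  -- the current round. Truncated subtraction keeps a row at level zero once it gets there.
  let lev : ℕ → ℕ → Fin N → ℕ := fun r s i => if i.1 < s then i.1 + 1 - r else i.1 - r
  have hstep : ∀ r s, s < N → weylSum A B (lev r (s + 1)) = weylSum A B (lev r s) := by
    intro r s hs
    by_cases hrs : r ≤ s
    · rw [weylSum_step A B c hA hB hAL hBM (lev r (s + 1)) ⟨s, hs⟩ (s - r)]
      · congr 1
        ext i
        by_cases hi : i = ⟨s, hs⟩
        · subst hi; simp [lev]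
        · have : i.1 ≠ s := fun h => hi (Fin.ext h)
          simp only [Function.update_of_ne hi, lev]
          split_ifs <;> omega
      · simp only [lev]; split_ifs <;> omega
      · intro i hi; simp only [lev] at *; split_ifs <;> omega
      · intro i hi; simp only [lev] at *; split_ifs <;> omega
    · congr 1
      ext i
      simp only [lev]
      split_ifs <;> omega
  have hsweep : ∀ r s, s ≤ N → weylSum A B (lev r s) = weylSum A B (lev r 0) := by
    intro r s
    induction s with
    | zero => intro _; rfl
    | succ s ih => intro hs; rw [hstep r s hs, ih (by omega)]
  have hround : ∀ r, weylSum A B (lev r N) = weylSum A B (lev 0 N) := by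
    intro r
    induction r with
    | zero => rfl
    | succ r ih =>
      rw [← ih, hsweep r N le_rfl]
      congr 1
      ext i
      have := i.2
      simp only [lev]
      split_ifs <;> omega
  have h0 : (fun i : Fin N => i.1 + 1) = lev 0 N := by
    ext i
    simp [lev, i.2]
  have h1 : (fun _ : Fin N => 0) = lev N N := by
    ext i
    have := i.2
    simp only [lev]
    split_ifs
    omega
  rw [h0, h1]
  exact (hround N).symm

/-! ### Convolution of the Laurent coefficients -/

/-- The convolution identity for bare Laurent coefficients. The levels are the parameter `k` in
`numer b k` (first family) and `denom b k` (second family): passing to the next level multiplies,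
respectively divides, by `1 - X / b_{k+1}`, which gives the two recurrences needed for summation by
parts. -/
theorem weylSum_lcoeff {N : ℕ} (b : ℕ → ℂ) (x y : Fin N → ℤ) (P Q : PowerSeries ℂ) :
    weylSum
        (fun k i n => lcoeff (numer b k * denom b (i.1 + 1) * P)
          (n - x i + ((k : ℤ) - ((i.1 + 1 : ℕ) : ℤ))))
        (fun k j n => lcoeff (numer b (j.1 + 1) * denom b k * Q)
          (y j - n + (((j.1 + 1 : ℕ) : ℤ) - (k : ℤ))))
        (fun i => i.1 + 1)
      = Matrix.det (Matrix.of fun i j : Fin N =>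
          lcoeff (numer b (j.1 + 1) * denom b (i.1 + 1) * (P * Q))
            (y j - x i + (((j.1 + 1 : ℕ) : ℤ) - ((i.1 + 1 : ℕ) : ℤ)))) := by
  have low : ∀ k : ℕ, ∃ L : ℤ, ∀ i : Fin N, ∀ n < L,
      lcoeff (numer b k * denom b (i.1 + 1) * P)
        (n - x i + ((k : ℤ) - ((i.1 + 1 : ℕ) : ℤ))) = 0 := by
    intro k
    obtain ⟨L, hL⟩ :=
      (Set.finite_range fun i : Fin N => x i - ((k : ℤ) - ((i.1 + 1 : ℕ) : ℤ))).bddBelow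
    refine ⟨L, fun i n hn => lcoeff_of_neg _ ?_⟩
    have := hL ⟨i, rfl⟩
    simp only at this
    omega
  have upp : ∀ k : ℕ, ∃ M : ℤ, ∀ j : Fin N, ∀ n, M < n →
      lcoeff (numer b (j.1 + 1) * denom b k * Q)
        (y j - n + (((j.1 + 1 : ℕ) : ℤ) - (k : ℤ))) = 0 := by
    intro k
    obtain ⟨M, hM⟩ :=
      (Set.finite_range fun j : Fin N => y j + (((j.1 + 1 : ℕ) : ℤ) - (k : ℤ))).bddAbove
    refine ⟨M, fun j n hn => lcoeff_of_neg _ ?_⟩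
    have := hM ⟨j, rfl⟩
    simp only at this
    omega
  rw [weylSum_levels _ _ (fun k => (b (k + 1))⁻¹) ?_ ?_ low upp]
  · obtain ⟨L, hL⟩ := low 0
    obtain ⟨M, hM⟩ := upp 0
    refine (cauchyBinet_weak _ _ L M hL hM).trans ?_
    congr 1
    ext i j
    simp only [Matrix.of_apply]
    have h := tsum_lcoeff_mul (numer b 0 * denom b (i.1 + 1) * P)
      (numer b (j.1 + 1) * denom b 0 * Q) (x i + ((i.1 + 1 : ℕ) : ℤ)) (y j + ((j.1 + 1 : ℕ) : ℤ))
    -- At level zero the products `numer b 0` and `denom b 0` are empty.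
    have e1 : numer b (j.1 + 1) * denom b (i.1 + 1) * (P * Q)
        = (numer b 0 * denom b (i.1 + 1) * P) * (numer b (j.1 + 1) * denom b 0 * Q) := by
      simp only [numer, denom, Finset.range_zero, Finset.prod_empty]
      ring
    rw [e1, show y j - x i + (((j.1 + 1 : ℕ) : ℤ) - ((i.1 + 1 : ℕ) : ℤ))
      = (y j + ((j.1 + 1 : ℕ) : ℤ)) - (x i + ((i.1 + 1 : ℕ) : ℤ)) by ring, ← h]
    refine tsum_congr fun n => ?_
    congr 2 <;> push_cast <;> ring
  · intro k i n
    rw [numer_succ, mul_assoc, mul_assoc, lcoeff_lin_mul, ← mul_assoc]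
    rw [show n - x i + (((k + 1 : ℕ) : ℤ) - ((i.1 + 1 : ℕ) : ℤ))
        = n + 1 - x i + ((k : ℤ) - ((i.1 + 1 : ℕ) : ℤ)) by push_cast; ring,
      show n + 1 - x i + ((k : ℤ) - ((i.1 + 1 : ℕ) : ℤ)) - 1
        = n - x i + ((k : ℤ) - ((i.1 + 1 : ℕ) : ℤ)) by ring]
  · intro k j n
    rw [denom_eq, show numer b (j.1 + 1) * (lin (b (k + 1))⁻¹ * denom b (k + 1)) * Q
      = lin (b (k + 1))⁻¹ * (numer b (j.1 + 1) * denom b (k + 1) * Q) by ring, lcoeff_lin_mul]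
    rw [show y j - n + (((j.1 + 1 : ℕ) : ℤ) - (k : ℤ)) - 1
        = y j - n + (((j.1 + 1 : ℕ) : ℤ) - ((k + 1 : ℕ) : ℤ)) by push_cast; ring,
      show y j - n + (((j.1 + 1 : ℕ) : ℤ) - (k : ℤ))
        = y j - (n - 1) + (((j.1 + 1 : ℕ) : ℤ) - ((k + 1 : ℕ) : ℤ)) by push_cast; ring]


/-- **Proposition 2.2**: convolution of the `(m-1)`-step transition matrix with the
one-step transition matrix gives the `m`-step transition matrix. -/
theorem convolution_transition_det
    (N : ℕ) (hN : 1 ≤ N)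
    (a b : ℕ → ℝ)
    (ha : ∀ i, 1 ≤ i → 0 ≤ a i ∧ a i ≤ 1)
    (hb : ∀ j, 1 ≤ j → j ≤ N → 0 < b j ∧ b j ≤ 1)
    (hab : ∀ i j, 1 ≤ i → 1 ≤ j → j ≤ N → 0 < a i * b j ∧ a i * b j < 1)
    (x y : Fin N → ℤ) (hx : Monotone x) (hy : Monotone y)
    (m : ℕ) (hm : 1 ≤ m)
    -- radii for the three contour integrals
    (RB RA RK : ℝ)
    (hRB : ∀ k, 1 ≤ k → k ≤ N → 1 / b k < RB)
    (hRA : ∀ k, 1 ≤ k → k ≤ N → 1 / (a m * b k) < RA)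
    (hRK : ∀ k, 1 ≤ k → k ≤ N → 1 / b k < RK) :
    -- `a(z) = ∏_{k=1}^{m-1} (1 - a_k/z)⁻¹`
    (∑' u : {u : Fin N → ℤ // Monotone u},
        -- Q(x,u)
        ((∏ j ∈ Finset.Icc 1 N, ∏ k ∈ Finset.Icc 1 (m - 1), ((1 - (a k : ℂ) * (b j : ℂ)))) *
          Matrix.det (Matrix.of fun i j : Fin N =>
            (2 * (Real.pi : ℂ) * Complex.I)⁻¹ *
              ∮ z in C(0, RB),
                z⁻¹ * (z * (b (j.1 + 1) : ℂ)) ^ (u.1 j)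
                  * (z * (b (i.1 + 1) : ℂ)) ^ (-(x i))
                  * ((∏ k ∈ Finset.Icc 1 (j.1 + 1), (z - ((b k : ℂ))⁻¹))
                      / ∏ k ∈ Finset.Icc 1 (i.1 + 1), (z - ((b k : ℂ))⁻¹))
                  * ∏ k ∈ Finset.Icc 1 (m - 1), (1 - (a k : ℂ) / z)⁻¹))
        -- P(u,y), with p_k = a_m * b_k
        * Matrix.det (Matrix.of fun i j : Fin N =>
            (2 * (Real.pi : ℂ) * Complex.I)⁻¹ *
              ∮ z in C(0, RA),
                z⁻¹ * (z * ((a m : ℂ) * (b (j.1 + 1) : ℂ))) ^ (y j)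
                  * (z * ((a m : ℂ) * (b (i.1 + 1) : ℂ))) ^ (-(u.1 i))
                  * ((∏ k ∈ Finset.Icc 1 (j.1 + 1), (z - ((a m : ℂ) * (b k : ℂ))⁻¹))
                      / ∏ k ∈ Finset.Icc 1 (i.1 + 1), (z - ((a m : ℂ) * (b k : ℂ))⁻¹))
                  * ((1 - (a m : ℂ) * (b (j.1 + 1) : ℂ)) / (1 - 1 / z))))
      = (∏ j ∈ Finset.Icc 1 N, ∏ k ∈ Finset.Icc 1 m, ((1 - (a k : ℂ) * (b j : ℂ)))) *
          Matrix.det (Matrix.of fun i j : Fin N =>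
            (2 * (Real.pi : ℂ) * Complex.I)⁻¹ *
              ∮ z in C(0, RK),
                z⁻¹ * (z * (b (j.1 + 1) : ℂ)) ^ (y j)
                  * (z * (b (i.1 + 1) : ℂ)) ^ (-(x i))
                  * ((∏ k ∈ Finset.Icc 1 (j.1 + 1), (z - ((b k : ℂ))⁻¹))
                      / ∏ k ∈ Finset.Icc 1 (i.1 + 1), (z - ((b k : ℂ))⁻¹))
                  * ((∏ k ∈ Finset.Icc 1 (m - 1), (1 - (a k : ℂ) / z)⁻¹)
                      / (1 - (a m : ℂ) / z))) := by
  have hb0 : ∀ k, 1 ≤ k → k ≤ N → (b k : ℂ) ≠ 0 := fun k h1 h2 =>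
    Complex.ofReal_ne_zero.2 (hb k h1 h2).1.ne'
  have hαpos : 0 < a m := by
    have h1 := (hab m 1 hm le_rfl hN).1
    exact pos_of_mul_pos_left h1 (hb 1 le_rfl hN).1.le
  have hα : (a m : ℂ) ≠ 0 := Complex.ofReal_ne_zero.2 hαpos.ne'
  have hαn : ‖(a m : ℂ)‖ = a m := by
    rw [Complex.norm_real, Real.norm_of_nonneg hαpos.le]
  have hpos : ∀ R : ℝ, (∀ k, 1 ≤ k → k ≤ N → 1 / b k < R) → 0 < R := fun R h =>
    (one_div_pos.2 (hb 1 le_rfl hN).1).trans (h 1 le_rfl hN)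
  -- In the variable `w = a_m z` the contour of radius `RA` becomes one of radius `a_m RA`.
  have hRA' : ∀ k, 1 ≤ k → k ≤ N → 1 / b k < a m * RA := by
    intro k h1 h2
    have h3 := mul_lt_mul_of_pos_left (hRA k h1 h2) hαpos
    have h4 := (hb k h1 h2).1.ne'
    calc 1 / b k = a m * (1 / (a m * b k)) := by field_simp
      _ < _ := h3
  have hRApos : 0 < RA := pos_of_mul_pos_right (hpos _ hRA') hαpos.le
  have hbn : ∀ R : ℝ, (∀ k, 1 ≤ k → k ≤ N → 1 / b k < R) → ∀ k, 1 ≤ k → k ≤ N →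
      ‖((b k : ℂ))⁻¹‖ < R := by
    intro R h k h1 h2
    rw [norm_inv, Complex.norm_real, Real.norm_of_nonneg (hb k h1 h2).1.le, ← one_div]
    exact h k h1 h2
  have han : ∀ R : ℝ, (∀ k, 1 ≤ k → k ≤ N → 1 / b k < R) → ∀ k, 1 ≤ k → ‖(a k : ℂ)‖ < R := by
    intro R h k h1
    rw [Complex.norm_real, Real.norm_of_nonneg (ha k h1).1]
    have hb1 := (hb 1 le_rfl hN).1
    exact ((lt_div_iff₀ hb1).2 (hab k 1 h1 le_rfl hN).2).trans (h 1 le_rfl hN)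
  set b' : ℕ → ℂ := fun k => (b k : ℂ) with hb'
  set P : PowerSeries ℂ := ∏ k ∈ Finset.Icc 1 (m - 1), geo (a k : ℂ) with hP
  set Q : PowerSeries ℂ := geo (a m : ℂ) with hQ
  have hPR : ∀ R : ℝ, (∀ k, 1 ≤ k → k ≤ N → 1 / b k < R) →
      LaurentAt R (fun z => ∏ k ∈ Finset.Icc 1 (m - 1), (1 - (a k : ℂ) / z)⁻¹) P := fun R h =>
    LaurentAt.prod _ (fun k z => (1 - (a k : ℂ) / z)⁻¹) _ fun k hk =>
      LaurentAt.inv_one_sub_div (han R h k (Finset.mem_Icc.1 hk).1)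
  have hQR : ∀ R : ℝ, (∀ k, 1 ≤ k → k ≤ N → 1 / b k < R) →
      LaurentAt R (fun z => (1 - (a m : ℂ) / z)⁻¹) Q := fun R h =>
    LaurentAt.inv_one_sub_div (han R h m hm)
  have entryB : ∀ (u : Fin N → ℤ) (i j : Fin N),
      (2 * (Real.pi : ℂ) * Complex.I)⁻¹ *
              (∮ z in C(0, RB),
                z⁻¹ * (z * (b (j.1 + 1) : ℂ)) ^ (u j)
                  * (z * (b (i.1 + 1) : ℂ)) ^ (-(x i))
                  * ((∏ k ∈ Finset.Icc 1 (j.1 + 1), (z - ((b k : ℂ))⁻¹))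
                      / ∏ k ∈ Finset.Icc 1 (i.1 + 1), (z - ((b k : ℂ))⁻¹))
                  * ∏ k ∈ Finset.Icc 1 (m - 1), (1 - (a k : ℂ) / z)⁻¹)
      = b' (i.1 + 1) ^ (-(x i)) * b' (j.1 + 1) ^ (u j) *
        lcoeff (numer b' (j.1 + 1) * denom b' (i.1 + 1) * P)
          (u j - x i + (((j.1 + 1 : ℕ) : ℤ) - ((i.1 + 1 : ℕ) : ℤ))) := by
    intro u i j
    have h := contour_entry (hpos RB hRB) one_ne_zero b' 1 (P := P)
      (by simpa only [norm_one, one_mul] using hPR RB hRB) (i.1 + 1) (j.1 + 1)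
      (hb0 _ (by omega) (by omega)) (hb0 _ (by omega) (by omega))
      (fun k h1 h2 => by simpa only [norm_one, one_mul] using hbn RB hRB k h1 (by omega))
      (u j) (x i)
    simpa only [one_mul, mul_one, one_zpow] using h
  have entryK : ∀ (i j : Fin N),
      (2 * (Real.pi : ℂ) * Complex.I)⁻¹ *
              (∮ z in C(0, RK),
                z⁻¹ * (z * (b (j.1 + 1) : ℂ)) ^ (y j)
                  * (z * (b (i.1 + 1) : ℂ)) ^ (-(x i))
                  * ((∏ k ∈ Finset.Icc 1 (j.1 + 1), (z - ((b k : ℂ))⁻¹))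
                      / ∏ k ∈ Finset.Icc 1 (i.1 + 1), (z - ((b k : ℂ))⁻¹))
                  * ((∏ k ∈ Finset.Icc 1 (m - 1), (1 - (a k : ℂ) / z)⁻¹)
                      / (1 - (a m : ℂ) / z)))
      = b' (i.1 + 1) ^ (-(x i)) * b' (j.1 + 1) ^ (y j) *
        lcoeff (numer b' (j.1 + 1) * denom b' (i.1 + 1) * (P * Q))
          (y j - x i + (((j.1 + 1 : ℕ) : ℤ) - ((i.1 + 1 : ℕ) : ℤ))) := by
    intro i j
    have h := contour_entry (hpos RK hRK) one_ne_zero b' 1 (P := P * Q)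
      (by simpa only [norm_one, one_mul] using (hPR RK hRK).mul (hQR RK hRK)) (i.1 + 1) (j.1 + 1)
      (hb0 _ (by omega) (by omega)) (hb0 _ (by omega) (by omega))
      (fun k h1 h2 => by simpa only [norm_one, one_mul] using hbn RK hRK k h1 (by omega))
      (y j) (x i)
    have e : ∀ z : ℂ, (∏ k ∈ Finset.Icc 1 (m - 1), (1 - (a k : ℂ) / z)⁻¹) / (1 - (a m : ℂ) / z)
        = (∏ k ∈ Finset.Icc 1 (m - 1), (1 - (a k : ℂ) / z)⁻¹) * (1 - (a m : ℂ) / z)⁻¹ :=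
      fun z => div_eq_mul_inv _ _
    simp only [e]
    simpa only [one_mul, mul_one, one_zpow] using h
  have entryA : ∀ (u : Fin N → ℤ) (i j : Fin N),
      (2 * (Real.pi : ℂ) * Complex.I)⁻¹ *
              (∮ z in C(0, RA),
                z⁻¹ * (z * ((a m : ℂ) * (b (j.1 + 1) : ℂ))) ^ (y j)
                  * (z * ((a m : ℂ) * (b (i.1 + 1) : ℂ))) ^ (-(u i))
                  * ((∏ k ∈ Finset.Icc 1 (j.1 + 1), (z - ((a m : ℂ) * (b k : ℂ))⁻¹))
                      / ∏ k ∈ Finset.Icc 1 (i.1 + 1), (z - ((a m : ℂ) * (b k : ℂ))⁻¹))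
                  * ((1 - (a m : ℂ) * (b (j.1 + 1) : ℂ)) / (1 - 1 / z)))
      = (b' (i.1 + 1) ^ (-(u i)) * (a m : ℂ) ^ ((i.1 + 1 : ℕ) : ℤ)) *
        ((1 - (a m : ℂ) * b' (j.1 + 1)) * b' (j.1 + 1) ^ (y j)
          * (a m : ℂ) ^ (-((j.1 + 1 : ℕ) : ℤ))) *
        lcoeff (numer b' (j.1 + 1) * denom b' (i.1 + 1) * Q)
          (y j - u i + (((j.1 + 1 : ℕ) : ℤ) - ((i.1 + 1 : ℕ) : ℤ))) := by
    intro u i j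
    have h := contour_entry hRApos hα b' (1 - (a m : ℂ) * b' (j.1 + 1)) (P := Q)
      (by rw [hαn]; exact hQR _ hRA') (i.1 + 1) (j.1 + 1)
      (hb0 _ (by omega) (by omega)) (hb0 _ (by omega) (by omega))
      (fun k h1 h2 => by rw [hαn]; exact hbn _ hRA' k h1 (by omega))
      (y j) (u i)
    rw [← h]
    congr 2
    funext z
    rw [div_eq_mul_inv (1 - (a m : ℂ) * _) (1 - 1 / z), ← mul_div_mul_left 1 z hα, mul_one]
  set c : ℂ := ∏ j ∈ Finset.Icc 1 N, ∏ k ∈ Finset.Icc 1 (m - 1), (1 - (a k : ℂ) * (b j : ℂ))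
    with hc
  -- The factor `k = m` of the prefactor comes from the columns of the one-step matrix.
  have hcm : ∏ j ∈ Finset.Icc 1 N, ∏ k ∈ Finset.Icc 1 m, (1 - (a k : ℂ) * (b j : ℂ))
      = c * ∏ j : Fin N, (1 - (a m : ℂ) * b' (j.1 + 1)) := by
    rw [Fin.prod_univ_eq_prod_range (fun k => 1 - (a m : ℂ) * b' (k + 1)),
      ← prod_Icc_eq_prod_range (fun k => 1 - (a m : ℂ) * b' k), hc, ← Finset.prod_mul_distrib]
    refine Finset.prod_congr rfl fun j _ => ?_
    obtain ⟨m', rfl⟩ : ∃ m', m = m' + 1 := ⟨m - 1, by omega⟩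
    rw [Finset.prod_Icc_succ_top (by omega)]
    rfl
  set A₁ : ℕ → Fin N → ℤ → ℂ := fun k i n => lcoeff (numer b' k * denom b' (i.1 + 1) * P)
    (n - x i + ((k : ℤ) - ((i.1 + 1 : ℕ) : ℤ))) with hA₁
  set B₁ : ℕ → Fin N → ℤ → ℂ := fun k j n => lcoeff (numer b' (j.1 + 1) * denom b' k * Q)
    (y j - n + (((j.1 + 1 : ℕ) : ℤ) - (k : ℤ))) with hB₁
  set lev : Fin N → ℕ := fun i => i.1 + 1 with hlev
  have hterm : ∀ u : Fin N → ℤ,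
      (∏ i : Fin N, b' (i.1 + 1) ^ (u i)) * (∏ i : Fin N, b' (i.1 + 1) ^ (-(u i))) = 1 := by
    intro u
    rw [← Finset.prod_mul_distrib]
    refine Finset.prod_eq_one fun i _ => ?_
    rw [zpow_neg, mul_inv_cancel₀ (zpow_ne_zero _ (hb0 _ (by omega) (by omega)))]
  have hαα : (∏ i : Fin N, (a m : ℂ) ^ ((i.1 + 1 : ℕ) : ℤ))
      * (∏ i : Fin N, (a m : ℂ) ^ (-((i.1 + 1 : ℕ) : ℤ))) = 1 := by
    rw [← Finset.prod_mul_distrib]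
    refine Finset.prod_eq_one fun i _ => ?_
    rw [zpow_neg, mul_inv_cancel₀ (zpow_ne_zero _ hα)]
  -- In the matrix of `Q(x,u)` the tuple `u` indexes columns, so the determinant is transposed.
  have hdA : ∀ u : Fin N → ℤ, Matrix.det (Matrix.of fun i j : Fin N =>
      lcoeff (numer b' (j.1 + 1) * denom b' (i.1 + 1) * P)
        (u j - x i + (((j.1 + 1 : ℕ) : ℤ) - ((i.1 + 1 : ℕ) : ℤ)))) = rowDet A₁ lev u := by
    intro u
    rw [← Matrix.det_transpose]
    rfl
  have hdB : ∀ u : Fin N → ℤ, Matrix.det (Matrix.of fun i j : Fin N =>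
      lcoeff (numer b' (j.1 + 1) * denom b' (i.1 + 1) * Q)
        (y j - u i + (((j.1 + 1 : ℕ) : ℤ) - ((i.1 + 1 : ℕ) : ℤ)))) = rowDet B₁ lev u := by
    intro u
    rfl
  have hsum := weylSum_lcoeff b' x y P Q
  simp only [entryA, entryB, entryK, hcm]
  simp only [det_scale, hdA, hdB, ← hsum, Finset.prod_mul_distrib]
  unfold weylSum
  rw [← tsum_subtype {u : Fin N → ℤ | Monotone u}, ← tsum_mul_left, ← tsum_mul_left]
  refine tsum_congr fun u => ?_
  linear_combination (c * (∏ i : Fin N, b' (i.1 + 1) ^ (-(x i)))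
    * (∏ i : Fin N, b' (i.1 + 1) ^ (y i)) * (∏ i : Fin N, (1 - (a m : ℂ) * b' (i.1 + 1)))
    * rowDet A₁ lev u.1 * rowDet B₁ lev u.1) * (hterm u.1 +
      (∏ i : Fin N, b' (i.1 + 1) ^ (u.1 i)) * (∏ i : Fin N, b' (i.1 + 1) ^ (-(u.1 i))) * hαα)
end

section
/- For all y ∈ W_N, H ∈ ℤ, 1 ≤ n ≤ N and integers 0 ≤ ℓ < m: Σ_{z ∈ W_N, z_N < H} ∏_{j=1}^{N} b_j^{z_j} · det[(∇(b_{(n,j]}) w_j(· | (ℓ,m]))(z_j − y_i)]_{1≤i,j≤N} = ∏_{j=1}^{N} b_j^{H−1} · det[(∇(b_{(n,j−1]}) w_j(· | (ℓ,m]))(H − y_i)]_{1≤i,j≤N}, where in each determinant the operator acts on the displayed function of its integer argument and is evaluated at the indicated point. -/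
/-!
All `w_j` are multiples `c_j u` of one function `u`, because `1 - a_k b_j` does not depend on the
integration variable. With `F_j = ∇(b_1) ⋯ ∇(b_j) ∏_{k ≤ n} ∇(b_k)⁻¹ u`, and columns
`V_j(x) = (b_{j+1}^{x-1} F_j(x - y_i))_i` (columns and variables `z_j` indexed from `0`), one has
`V_j(x+1) - V_j(x) = (b_{j+1}^x F_{j+1}(x - y_i))_i`, which is proportional to `V_{j+1}(x)`.

Thus the summand is, up to `∏ c_j`, the determinant with columns `ΔV_j(z_j)`. Summing the last
variable over `z_{N-2} ≤ z_{N-1} < H` telescopes the last column to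
`V_{N-1}(H) - V_{N-1}(z_{N-2})`, and the second term is proportional to the previous column, so it
drops out. Iterating replaces every column by its value at `H` (`sum_monotone_diff`); the innermost
sum, which extends to `-∞`, has no lower boundary term because `F_0` vanishes near `-∞`. This last
fact follows from `u(x) = 0` for
`x < 0` (`wBase_eq_zero`): the contour can be pushed to infinity, where the integrand is `O(z⁻²)`.
The same vanishing reduces the infinite sum to a finite one.
-/

/-- The discrete derivative `∇(b) f (x) = f(x+1) - (1/b) f(x)`. -/
noncomputable def nabla (b : ℝ) (f : ℤ → ℂ) : ℤ → ℂ :=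
  fun x => f (x + 1) - ((b : ℂ))⁻¹ * f x

/-- The inverse operator `∇(b)⁻¹ f (x) = Σ_{n<0} b^{n+1} f(x+n)`. -/
noncomputable def nablaInv (b : ℝ) (f : ℤ → ℂ) : ℤ → ℂ :=
  fun x => ∑' k : ℕ, ((b : ℂ)) ^ (-(k : ℤ)) * f (x - 1 - k)

/-- `∏_{k=1}^{j} ∇(b_k)` applied to `f`. -/
noncomputable def nablaIter (b : ℕ → ℝ) : ℕ → (ℤ → ℂ) → (ℤ → ℂ)
  | 0 => id
  | j + 1 => fun f => nabla (b (j + 1)) (nablaIter b j f)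

/-- `∏_{k=1}^{i} ∇(b_k)⁻¹` applied to `f`. -/
noncomputable def nablaInvIter (b : ℕ → ℝ) : ℕ → (ℤ → ℂ) → (ℤ → ℂ)
  | 0 => id
  | i + 1 => fun f => nablaInv (b (i + 1)) (nablaInvIter b i f)

/-- The operator `∇(b_{(i,j]}) = ∏_{k=1}^{j} ∇(b_k) ∏_{k=1}^{i} ∇(b_k)⁻¹`. -/
noncomputable def nablaRange (b : ℕ → ℝ) (i j : ℕ) (f : ℤ → ℂ) : ℤ → ℂ :=
  nablaIter b j (nablaInvIter b i f)

/-- The function `w_j(x | (ℓ,m]) = (1/2πi) ∮_{|z|=R} z^{x-1} ∏_{k=ℓ+1}^{m} (1-a_k b_j)/(1-a_k/z) dz`. -/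
noncomputable def wFun (a b : ℕ → ℝ) (R : ℝ) (j ℓ m : ℕ) : ℤ → ℂ :=
  fun x => (2 * (Real.pi : ℂ) * Complex.I)⁻¹ *
    ∮ z in C(0, R),
      z ^ (x - 1) * ∏ k ∈ Finset.Icc (ℓ + 1) m,
        ((1 - (a k : ℂ) * (b j : ℂ)) / (1 - (a k : ℂ) / z))

open Finset

/-! ### The telescoping sum -/

open Classical in
/-- The monotone `z : Fin N → ℤ` with all values in `[K, H)`. -/
noncomputable def monoBox (N : ℕ) (K H : ℤ) : Finset (Fin N → ℤ) :=
  (Fintype.piFinset fun _ => Ico K H).filter Monotone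

lemma mem_monoBox {N : ℕ} {K H : ℤ} {z : Fin N → ℤ} :
    z ∈ monoBox N K H ↔ (∀ i, K ≤ z i ∧ z i < H) ∧ Monotone z := by
  simp [monoBox]

lemma monotone_snoc_iff {N : ℕ} (z : Fin N → ℤ) (t : ℤ) :
    Monotone (Fin.snoc z t : Fin (N + 1) → ℤ) ↔ Monotone z ∧ ∀ i, z i ≤ t := by
  constructor
  · intro h
    refine ⟨fun i j hij => ?_, fun i => ?_⟩
    · simpa using h (Fin.castSucc_le_castSucc_iff.2 hij)
    · simpa using h (Fin.le_last i.castSucc)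
  · rintro ⟨h1, h2⟩ i j hij
    induction j using Fin.lastCases with
    | last =>
      induction i using Fin.lastCases with
      | last => exact le_rfl
      | cast i => simpa using h2 i
    | cast j =>
      induction i using Fin.lastCases with
      | last => exact absurd hij (not_le.2 (Fin.castSucc_lt_last j))
      | cast i => simpa using h1 (Fin.castSucc_le_castSucc_iff.1 hij)

lemma sum_monoBox_succ {N : ℕ} {K H : ℤ} (f : (Fin (N + 1) → ℤ) → ℂ) :
    ∑ z ∈ monoBox (N + 1) K H, f z =
      ∑ z ∈ monoBox N K H, ∑ t ∈ (Ico K H).filter (fun t => ∀ i, z i ≤ t),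
        f (Fin.snoc z t : Fin (N + 1) → ℤ) := by
  rw [Finset.sum_sigma']
  refine Finset.sum_bij' (fun z _ => ⟨fun i => z i.castSucc, z (Fin.last N)⟩)
    (fun p _ => (Fin.snoc p.1 p.2 : Fin (N + 1) → ℤ)) ?_ ?_ ?_ ?_ ?_
  · intro z hz
    rw [mem_monoBox] at hz
    simp only [mem_sigma, mem_monoBox, mem_filter, mem_Ico]
    exact ⟨⟨fun i => hz.1 _, fun i j hij => hz.2 (Fin.castSucc_le_castSucc_iff.2 hij)⟩,
      hz.1 _, fun i => hz.2 (Fin.le_last _)⟩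
  · rintro ⟨z, t⟩ hp
    simp only [mem_sigma, mem_monoBox, mem_filter, mem_Ico] at hp
    obtain ⟨⟨h1, h2⟩, h3, h4⟩ := hp
    rw [mem_monoBox, monotone_snoc_iff]
    refine ⟨fun i => ?_, h2, h4⟩
    induction i using Fin.lastCases with
    | last => simpa using h3
    | cast i => simpa using h1 i
  · intro z _
    exact Fin.snoc_init_self z
  · rintro ⟨z, t⟩ _
    simp
  · intro z _
    exact congrArg f (Fin.snoc_init_self z).symm

lemma sum_Ico_diff {E : Type*} [AddCommGroup E] (V : ℤ → E) {A B : ℤ} (h : A ≤ B) :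
    ∑ t ∈ Ico A B, (V (t + 1) - V t) = V B - V A := by
  induction B, h using Int.leInduction with
  | base => simp
  | succ B hB ih =>
    have : Ico A (B + 1) = insert B (Ico A B) := by
      ext t; simp only [mem_Ico, mem_insert]; omega
    rw [this, Finset.sum_insert (by simp), ih]
    abel

/-- If `V (j+1) x` is proportional to the difference `ΔV_j(x)` and `V 0` vanishes at the lower end
`K`, then the sum of an alternating form in the `ΔV_j(z_j)` over weakly increasing `z` in `[K, H)`
is the form evaluated at the `V_j(H)`. The alternating form is encoded as a multilinear map with a
vanishing hypothesis so that currying in the last variable stays within the same class. -/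
lemma sum_monotone_diff {E : Type*} [AddCommGroup E] [Module ℂ E] (V : ℕ → ℤ → E)
    (c : ℕ → ℤ → ℂ) (K H : ℤ) (hKH : K ≤ H) (h0 : V 0 K = 0) :
    ∀ (N : ℕ) (_ : ∀ j x, j < N → V (j + 1) x = c j x • (V j (x + 1) - V j x))
      (D : MultilinearMap ℂ (fun _ : Fin N => E) ℂ)
      (_ : ∀ v i j, v i = v j → i ≠ j → D v = 0),
      ∑ z ∈ monoBox N K H, D (fun j => V j (z j + 1) - V j (z j)) = D (fun j => V j H)
  | 0, _, D, _ => by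
    have : monoBox 0 K H = {Fin.elim0} := by
      ext z
      rw [mem_monoBox, mem_singleton]
      exact ⟨fun _ => Subsingleton.elim _ _, fun _ => ⟨fun i => i.elim0, fun i => i.elim0⟩⟩
    rw [this, sum_singleton]
    exact congrArg D (Subsingleton.elim _ _)
  | N + 1, hV, D, hD => by
    let D' : MultilinearMap ℂ (fun _ : Fin N => E) ℂ :=
      (LinearMap.applyₗ (V N H)).compMultilinearMap D.curryRight
    have hD'app : ∀ v, D' v = D (Fin.snoc v (V N H)) := fun v => rfl
    have hD' : ∀ v i j, v i = v j → i ≠ j → D' v = 0 := by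
      intro v i j hij hne
      rw [hD'app]
      exact hD _ i.castSucc j.castSucc (by simpa using hij)
        (fun h => hne (Fin.castSucc_injective _ h))
    have ih := sum_monotone_diff V c K H hKH h0 N (fun j x hj => hV j x (by omega)) D' hD'
    have hR : D (fun j : Fin (N + 1) => V j H) = D' (fun j => V j H) := by
      rw [hD'app]
      congr 1
      funext i
      induction i using Fin.lastCases with
      | last => simp
      | cast i => simp
    rw [hR, ← ih, sum_monoBox_succ]
    refine Finset.sum_congr rfl fun z hz => ?_
    rw [mem_monoBox] at hz
    have hsn : ∀ t, D (fun j : Fin (N + 1) =>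
        V j ((Fin.snoc z t : Fin (N + 1) → ℤ) j + 1) - V j ((Fin.snoc z t : Fin (N + 1) → ℤ) j))
        = D.curryRight (fun j : Fin N => V j (z j + 1) - V j (z j)) (V N (t + 1) - V N t) := by
      intro t
      rw [MultilinearMap.curryRight_apply]
      congr 1
      funext i
      induction i using Fin.lastCases with
      | last => simp
      | cast i => simp
    simp only [hsn]
    rw [← map_sum]
    rcases N with _ | M
    · -- With a single variable left, the lower boundary term vanishes by `h0`.
      have : (Ico K H).filter (fun t => ∀ i : Fin 0, z i ≤ t) = Ico K H :=
        Finset.filter_true_of_mem fun t _ i => i.elim0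
      rw [this, sum_Ico_diff _ hKH, h0, sub_zero]
      rfl
    · have : (Ico K H).filter (fun t => ∀ i : Fin (M + 1), z i ≤ t) = Ico (z (Fin.last M)) H := by
        ext t
        simp only [mem_filter, mem_Ico]
        constructor
        · rintro ⟨h1, h2⟩
          exact ⟨h2 _, h1.2⟩
        · rintro ⟨h1, h2⟩
          exact ⟨⟨(hz.1 (Fin.last M)).1.trans h1, h2⟩,
            fun i => (hz.2 (Fin.le_last i)).trans h1⟩
      rw [this, sum_Ico_diff _ (hz.1 (Fin.last M)).2.le, map_sub]
      -- The lower boundary term is proportional to the preceding column.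
      have hz0 : D.curryRight (fun j : Fin (M + 1) => V j (z j + 1) - V j (z j))
          (V (M + 1) (z (Fin.last M))) = 0 := by
        rw [hV M _ (by omega), map_smul, MultilinearMap.curryRight_apply,
          hD _ (Fin.last M).castSucc (Fin.last (M + 1)) (by simp)
            (Fin.castSucc_lt_last _).ne, smul_zero]
      rw [hz0, sub_zero]
      rfl

/-! ### The operators `∇` -/

lemma nablaRange_const_mul (b : ℕ → ℝ) (i j : ℕ) (c : ℂ) (f : ℤ → ℂ) :
    nablaRange b i j (fun x => c * f x) = fun x => c * nablaRange b i j f x := by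
  have h1 : nablaInvIter b i (fun x => c * f x) = fun x => c * nablaInvIter b i f x := by
    induction i with
    | zero => rfl
    | succ i ih =>
      funext x
      simp only [nablaInvIter, ih, nablaInv]
      rw [← tsum_mul_left]
      exact tsum_congr fun k => by ring
  unfold nablaRange
  rw [h1]
  induction j with
  | zero => rfl
  | succ j ih =>
    funext x
    simp only [nablaIter, ih, nabla]
    ring

lemma nablaInvIter_eq_zero (b : ℕ → ℝ) (i : ℕ) (f : ℤ → ℂ) (C : ℤ) (hf : ∀ x < C, f x = 0) :
    ∀ x < C, nablaInvIter b i f x = 0 := by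
  induction i with
  | zero => exact hf
  | succ i ih =>
    intro x hx
    simp only [nablaInvIter, nablaInv]
    have : ∀ k : ℕ, ((b (i + 1) : ℂ)) ^ (-(k : ℤ)) * nablaInvIter b i f (x - 1 - k) = 0 :=
      fun k => by rw [ih _ (by omega), mul_zero]
    simp only [this, tsum_zero]

/-! ### The contour integral -/

/-- The common factor of the `w_j`: the contour integral with the numerators `1 - a_k b_j`
removed. -/
noncomputable def wBase (a : ℕ → ℝ) (R : ℝ) (ℓ m : ℕ) : ℤ → ℂ :=
  fun x => (2 * (Real.pi : ℂ) * Complex.I)⁻¹ *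
    ∮ z in C(0, R), z ^ (x - 1) * ∏ k ∈ Finset.Icc (ℓ + 1) m, (1 - (a k : ℂ) / z)⁻¹

lemma wFun_eq (a b : ℕ → ℝ) (R : ℝ) (j ℓ m : ℕ) :
    wFun a b R j ℓ m = fun x =>
      (∏ k ∈ Finset.Icc (ℓ + 1) m, (1 - (a k : ℂ) * (b j : ℂ))) * wBase a R ℓ m x := by
  funext x
  unfold wFun wBase
  rw [mul_left_comm, ← circleIntegral.integral_const_mul (∏ k ∈ _, _)]
  congr 2
  funext z
  simp only [div_eq_mul_inv (1 - (a _ : ℂ) * (b j : ℂ)), Finset.prod_mul_distrib]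
  ring

lemma one_sub_div_ne_zero {r : ℝ} (hr0 : 0 ≤ r) (hr1 : r ≤ 1) {z : ℂ} (hz : 1 < ‖z‖) :
    1 - (r : ℂ) / z ≠ 0 := by
  intro h
  have h1 : ‖(r : ℂ) / z‖ = 1 := by rw [← sub_eq_zero.1 h, norm_one]
  rw [norm_div, Complex.norm_real, Real.norm_of_nonneg hr0, div_eq_one_iff_eq (by positivity)] at h1
  linarith

lemma norm_inv_one_sub_div_le {r : ℝ} (hr0 : 0 ≤ r) (hr1 : r ≤ 1) {z : ℂ} (hz : 2 ≤ ‖z‖) :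
    ‖(1 - (r : ℂ) / z)⁻¹‖ ≤ 2 := by
  have h1 : ‖(r : ℂ) / z‖ ≤ 1 / 2 := by
    rw [norm_div, Complex.norm_real, Real.norm_of_nonneg hr0, div_le_iff₀ (by positivity)]
    linarith
  have h2 : 1 / 2 ≤ ‖1 - (r : ℂ) / z‖ := by
    have := norm_sub_norm_le (1 : ℂ) ((r : ℂ) / z)
    rw [norm_one] at this
    linarith
  rw [norm_inv]
  exact inv_le_of_inv_le₀ (by norm_num) (by linarith)

/-- For `x < 0` the integrand is `O(z⁻²)` at infinity and holomorphic outside the unit disc, so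
enlarging the contour shows that the integral vanishes. -/
lemma wBase_eq_zero (a : ℕ → ℝ) (ha : ∀ i, 1 ≤ i → 0 ≤ a i ∧ a i ≤ 1) (R : ℝ) (hR : 1 < R)
    (ℓ m : ℕ) (x : ℤ) (hx : x < 0) : wBase a R ℓ m x = 0 := by
  have hk1 : ∀ k ∈ Finset.Icc (ℓ + 1) m, 1 ≤ k := fun k hk => by
    have := (Finset.mem_Icc.1 hk).1
    omega
  set g : ℂ → ℂ := fun z => z ^ x * ∏ k ∈ Finset.Icc (ℓ + 1) m, (1 - (a k : ℂ) / z)⁻¹ with hg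
  have hfg : ∀ z : ℂ, z ≠ 0 →
      z ^ (x - 1) * ∏ k ∈ Finset.Icc (ℓ + 1) m, (1 - (a k : ℂ) / z)⁻¹ = (z - 0)⁻¹ • g z := by
    intro z hz
    rw [hg, zpow_sub_one₀ hz, smul_eq_mul, sub_zero]
    ring
  have hdiff : ∀ z : ℂ, 1 < ‖z‖ → DifferentiableAt ℂ g z := by
    intro z hz
    have hz0 : z ≠ 0 := norm_pos_iff.1 (by linarith)
    refine DifferentiableAt.mul (differentiableAt_zpow.2 (Or.inl hz0)) ?_
    refine DifferentiableAt.fun_finsetProd fun k hk => ?_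
    have hk := ha k (hk1 k hk)
    refine DifferentiableAt.inv ?_ (one_sub_div_ne_zero hk.1 hk.2 hz)
    exact (differentiableAt_const _).sub ((differentiableAt_const _).div differentiableAt_id hz0)
  set I : ℂ := ∮ z in C(0, R), z ^ (x - 1) * ∏ k ∈ Finset.Icc (ℓ + 1) m, (1 - (a k : ℂ) / z)⁻¹
    with hI
  have hIg : ∀ r, 1 < r →
      (∮ z in C(0, r), z ^ (x - 1) * ∏ k ∈ Finset.Icc (ℓ + 1) m, (1 - (a k : ℂ) / z)⁻¹)
        = ∮ z in C(0, r), (z - 0)⁻¹ • g z := by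
    intro r hr
    refine circleIntegral.integral_congr (by linarith) fun z hz => hfg z ?_
    rw [mem_sphere_zero_iff_norm] at hz
    exact norm_pos_iff.1 (by linarith)
  have hbound : ∀ r, max 2 R ≤ r → ‖I‖ ≤ 2 * Real.pi * 2 ^ (Finset.Icc (ℓ + 1) m).card * r⁻¹ := by
    intro r hr
    have hr2 : 2 ≤ r := (le_max_left _ _).trans hr
    have hrR : R ≤ r := (le_max_right _ _).trans hr
    have heq := Complex.circleIntegral_sub_center_inv_smul_eq_of_differentiable_on_annulus_off_countable
      (c := 0) (r := R) (R := r) (f := g) (by linarith) hrR (s := ∅) Set.countable_empty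
      (fun z hz => (hdiff z (by
        have : R ≤ ‖z‖ := by simpa using hz.2
        linarith)).continuousAt.continuousWithinAt)
      (fun z hz => hdiff z (by
        have : R < ‖z‖ := by simpa using hz.1.2
        linarith))
    rw [hI, hIg R hR, ← heq, ← hIg r (by linarith)]
    refine (circleIntegral.norm_integral_le_of_norm_le_const
      (C := r ^ (-2 : ℤ) * 2 ^ (Finset.Icc (ℓ + 1) m).card) (by linarith) fun z hz => ?_).trans ?_
    · rw [mem_sphere_zero_iff_norm] at hz
      rw [norm_mul, norm_zpow, hz, norm_prod]
      refine mul_le_mul (zpow_le_zpow_right₀ (by linarith) (by omega)) ?_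
        (Finset.prod_nonneg fun _ _ => norm_nonneg _) (by positivity)
      rw [← Finset.prod_const]
      refine Finset.prod_le_prod (fun _ _ => norm_nonneg _) fun k hk => ?_
      have hk := ha k (hk1 k hk)
      exact norm_inv_one_sub_div_le hk.1 hk.2 (by linarith)
    · have : r ≠ 0 := by linarith
      refine le_of_eq ?_
      rw [zpow_neg]
      field_simp
  have hlim : Filter.Tendsto
      (fun r : ℝ => 2 * Real.pi * 2 ^ (Finset.Icc (ℓ + 1) m).card * r⁻¹) Filter.atTop (nhds 0) := by
    simpa using tendsto_inv_atTop_zero.const_mul (2 * Real.pi * 2 ^ (Finset.Icc (ℓ + 1) m).card)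
  have hle : ‖I‖ ≤ 0 := ge_of_tendsto hlim
    ((Filter.eventually_ge_atTop (max 2 R)).mono fun r hr => hbound r hr)
  unfold wBase
  rw [← hI, norm_le_zero_iff.1 hle, mul_zero]

/-! ### Assembly -/

/-- **Lemma 3.3** (summing out the top-level variable `z ∈ W_N` with `z_N < H`). -/
theorem lemma_C
    (N : ℕ) (hN : 1 ≤ N)
    (a b : ℕ → ℝ)
    (ha : ∀ i, 1 ≤ i → 0 ≤ a i ∧ a i ≤ 1)
    (hb : ∀ j, 1 ≤ j → j ≤ N → 0 < b j ∧ b j ≤ 1)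
    (hab : ∀ i j, 1 ≤ i → 1 ≤ j → j ≤ N → 0 < a i * b j ∧ a i * b j < 1)
    (y : Fin N → ℤ) (hy : Monotone y)
    (H : ℤ)
    (n : ℕ) (hn1 : 1 ≤ n) (hnN : n ≤ N)
    (ℓ m : ℕ) (hℓm : ℓ < m)
    (R : ℝ) (hR : ∀ k, 1 ≤ k → k ≤ N → 1 / b k < R) :
    (∑' z : {z : Fin N → ℤ // Monotone z ∧ z ⟨N - 1, by omega⟩ < H},
        (∏ j : Fin N, ((b (j.1 + 1) : ℂ)) ^ (z.1 j)) *
          Matrix.det (Matrix.of fun i j : Fin N =>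
            nablaRange b n (j.1 + 1) (wFun a b R (j.1 + 1) ℓ m)
              (z.1 j - y i)))
      = (∏ j ∈ Finset.Icc 1 N, ((b j : ℂ)) ^ (H - 1)) *
          Matrix.det (Matrix.of fun i j : Fin N =>
            nablaRange b n j.1 (wFun a b R (j.1 + 1) ℓ m)
              (H - y i)) := by
  obtain ⟨M, rfl⟩ : ∃ M, N = M + 1 := ⟨N - 1, by omega⟩
  have hb0 : ∀ j, j < M + 1 → (b (j + 1) : ℂ) ≠ 0 := fun j hj => by
    exact_mod_cast (hb (j + 1) (by omega) (by omega)).1.ne'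
  have hR1 : 1 < R := by
    have h1 := hb 1 le_rfl hN
    refine lt_of_le_of_lt ?_ (hR 1 le_rfl hN)
    rw [le_div_iff₀ h1.1]
    linarith
  set c : Fin (M + 1) → ℂ := fun j =>
    ∏ k ∈ Finset.Icc (ℓ + 1) m, (1 - (a k : ℂ) * (b (j.1 + 1) : ℂ)) with hc
  set F : ℕ → ℤ → ℂ := fun j => nablaRange b n j (wBase a R ℓ m) with hF
  have hFw : ∀ (j : Fin (M + 1)) (k : ℕ) (x : ℤ),
      nablaRange b n k (wFun a b R (j.1 + 1) ℓ m) x = c j * F k x := by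
    intro j k x
    rw [wFun_eq, nablaRange_const_mul]
  have hF0 : ∀ x < 0, F 0 x = 0 :=
    nablaInvIter_eq_zero b n _ 0 fun x hx => wBase_eq_zero a ha R hR1 ℓ m x hx
  let V : ℕ → ℤ → (Fin (M + 1) → ℂ) := fun j x i => (b (j + 1) : ℂ) ^ (x - 1) * F j (x - y i)
  have hdV : ∀ j x, j < M + 1 →
      V j (x + 1) - V j x = fun i => (b (j + 1) : ℂ) ^ x * F (j + 1) (x - y i) := by
    intro j x hj
    funext i
    have h1 : F (j + 1) (x - y i) = F j (x - y i + 1) - ((b (j + 1) : ℂ))⁻¹ * F j (x - y i) := rfl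
    simp only [V, Pi.sub_apply, h1, zpow_sub_one₀ (hb0 j hj), add_sub_cancel_right,
      show x + 1 - y i = x - y i + 1 by ring]
    ring
  have hV : ∀ j x, j < M + 1 → V (j + 1) x =
      ((b (j + 1 + 1) : ℂ) ^ (x - 1) * ((b (j + 1) : ℂ) ^ x)⁻¹) • (V j (x + 1) - V j x) := by
    intro j x hj
    rw [hdV j x hj]
    funext i
    have := zpow_ne_zero x (hb0 j hj)
    simp only [V, Pi.smul_apply, smul_eq_mul]
    field_simp
  -- As `y` is monotone, `y 0` is its minimum, so `V 0` vanishes strictly below `y 0`.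
  set K : ℤ := min (y 0 - 1) H with hK
  have hV0 : ∀ x ≤ K, V 0 x = 0 := by
    intro x hx
    funext i
    have h1 : y 0 ≤ y i := hy (Fin.zero_le i)
    have h2 : K ≤ y 0 - 1 := min_le_left _ _
    simp only [V, Pi.zero_apply]
    rw [hF0 _ (by omega), mul_zero]
  let D : MultilinearMap ℂ (fun _ : Fin (M + 1) => (Fin (M + 1) → ℂ)) ℂ :=
    (Matrix.detRowAlternating (R := ℂ) (n := Fin (M + 1))).toMultilinearMap
  have hDapp : ∀ v : Fin (M + 1) → Fin (M + 1) → ℂ,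
      D v = Matrix.det (Matrix.of fun i j => v j i) := by
    intro v
    exact (Matrix.det_transpose (Matrix.of v)).symm
  have hD : ∀ v i j, v i = v j → i ≠ j → D v = 0 := fun v i j h hne =>
    (Matrix.detRowAlternating (R := ℂ) (n := Fin (M + 1))).map_eq_zero_of_eq v h hne
  have key := sum_monotone_diff V _ K H (min_le_right _ _) (hV0 K le_rfl) (M + 1) hV D hD
  have hterm : ∀ z : Fin (M + 1) → ℤ,
      (∏ j : Fin (M + 1), ((b (j.1 + 1) : ℂ)) ^ (z j)) *
          Matrix.det (Matrix.of fun i j : Fin (M + 1) =>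
            nablaRange b n (j.1 + 1) (wFun a b R (j.1 + 1) ℓ m) (z j - y i))
        = (∏ j, c j) * D (fun j => V j (z j + 1) - V j (z j)) := by
    intro z
    have h1 : (fun j : Fin (M + 1) => V j (z j + 1) - V j (z j)) =
        fun j i => (b (j.1 + 1) : ℂ) ^ (z j) * F (j.1 + 1) (z j - y i) := by
      funext j
      exact hdV j _ j.2
    rw [h1, hDapp]
    simp only [hFw]
    have h2 := Matrix.det_mul_row c
      (Matrix.of fun i j : Fin (M + 1) => F (j.1 + 1) (z j - y i))
    have h3 := Matrix.det_mul_row (fun j : Fin (M + 1) => (b (j.1 + 1) : ℂ) ^ (z j))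
      (Matrix.of fun i j : Fin (M + 1) => F (j.1 + 1) (z j - y i))
    simp only [Matrix.of_apply] at h2 h3
    rw [h2, h3]
    ring
  have hrhs : (∏ j ∈ Finset.Icc 1 (M + 1), ((b j : ℂ)) ^ (H - 1)) *
          Matrix.det (Matrix.of fun i j : Fin (M + 1) =>
            nablaRange b n j.1 (wFun a b R (j.1 + 1) ℓ m) (H - y i))
        = (∏ j, c j) * D (fun j => V j H) := by
    rw [hDapp]
    simp only [hFw, V]
    have h2 := Matrix.det_mul_row c (Matrix.of fun i j : Fin (M + 1) => F j.1 (H - y i))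
    have h3 := Matrix.det_mul_row (fun j : Fin (M + 1) => (b (j.1 + 1) : ℂ) ^ (H - 1))
      (Matrix.of fun i j : Fin (M + 1) => F j.1 (H - y i))
    simp only [Matrix.of_apply] at h2 h3
    have h4 : ∏ j ∈ Finset.Icc 1 (M + 1), ((b j : ℂ)) ^ (H - 1)
        = ∏ j : Fin (M + 1), (b (j.1 + 1) : ℂ) ^ (H - 1) := by
      rw [Fin.prod_univ_eq_prod_range (fun j => (b (j + 1) : ℂ) ^ (H - 1)),
        Finset.range_eq_Ico, Finset.prod_Ico_add' (fun j => (b j : ℂ) ^ (H - 1)) 0 (M + 1) 1]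
      rfl
    rw [h2, h3, h4]
    ring
  rw [hrhs, ← key, Finset.mul_sum]
  simp only [hterm]
  let S : Set (Fin (M + 1) → ℤ) := {z | Monotone z ∧ z ⟨M + 1 - 1, by omega⟩ < H}
  have hsub := tsum_subtype S
    (fun z => (∏ j, c j) * D (fun j => V j (z j + 1) - V j (z j)))
  refine hsub.trans ?_
  rw [tsum_eq_sum (s := monoBox (M + 1) K H)]
  · refine Finset.sum_congr rfl fun z hz => ?_
    rw [mem_monoBox] at hz
    exact Set.indicator_of_mem (s := S) ⟨hz.2, (hz.1 _).2⟩ _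
  · intro z hz
    by_cases hzs : Monotone z ∧ z ⟨M + 1 - 1, by omega⟩ < H
    · rw [Set.indicator_of_mem (s := S) hzs]
      -- Outside the box the smallest coordinate lies below `K`, which kills the first column.
      have hz0 : z 0 < K := by
        by_contra! hcon
        refine hz (mem_monoBox.2 ⟨fun i => ⟨hcon.trans (hzs.1 (Fin.zero_le i)), ?_⟩, hzs.1⟩)
        refine lt_of_le_of_lt (hzs.1 ?_) hzs.2
        rw [Fin.le_def]
        simp only []
        omega
      rw [D.map_coord_zero 0, mul_zero]
      simp only [Fin.val_zero]
      rw [hV0 _ (by omega), hV0 _ (by omega), sub_zero]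
    · exact Set.indicator_of_notMem (s := S) hzs _
end

section
/- Fix x ∈ W_N, integers 0 < m < M, 1 ≤ n < N, h, H ∈ ℤ and θ ∈ ℂ. Define S = Σ_{y ∈ W_N} ∏_{j=1}^{N} b_j^{H−1−x_j} θ^{1{y_j < h}} · det[(∇(b_{(i,n]}) w_j(· | (0,m]))(y_j − x_i)]_{1≤i,j≤N} · det[(∇(b_{(n,j−1]}) w_j(· | (m,M]))(H − y_i)]_{1≤i,j≤N}. Then S = det[θ L_1(i,j) − L_2(i,j)]_{1≤i,j≤N}, where L_1(i,j) = (1/(2πi)^2)∮_{|z|=R_1} dz ∮_{|w|=R_2} dw (b_i z)^{h−1}(b_j w)^{H−h}(b_i z)^{−x_i}(z−w)^{−1} [∏_{k=1}^{n}(z−1/b_k)/∏_{k=1}^{i}(z−1/b_k)][∏_{k=1}^{j−1}(w−1/b_k)/∏_{k=1}^{n}(w−1/b_k)] ∏_{k=1}^{m}(1−a_k b_i)/(1−a_k/z) ∏_{k=m+1}^{M}(1−a_k b_j)/(1−a_k/w) with R_1 > R_2 > max_k{1/b_k}, and L_2 is given by the same formula with the contour ordering reversed to R_2 > R_1 > max_k{1/b_k}.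 -/
/-- The double contour integral kernel `L`, with radius `R₁` for the variable `z` and
radius `R₂` for the variable `w`. -/
noncomputable def Lkernel (N : ℕ) (a b : ℕ → ℝ) (x : Fin N → ℤ) (m M n : ℕ) (h H : ℤ)
    (R₁ R₂ : ℝ) (i j : Fin N) : ℂ :=
  (2 * (Real.pi : ℂ) * Complex.I)⁻¹ ^ 2 *
    ∮ z in C(0, R₁), ∮ w in C(0, R₂),
      ((b (i.1 + 1) : ℂ) * z) ^ (h - 1) * ((b (j.1 + 1) : ℂ) * w) ^ (H - h)
        * ((b (i.1 + 1) : ℂ) * z) ^ (-(x i)) * (z - w)⁻¹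
        * ((∏ k ∈ Finset.Icc 1 n, (z - ((b k : ℂ))⁻¹))
            / ∏ k ∈ Finset.Icc 1 (i.1 + 1), (z - ((b k : ℂ))⁻¹))
        * ((∏ k ∈ Finset.Icc 1 j.1, (w - ((b k : ℂ))⁻¹))
            / ∏ k ∈ Finset.Icc 1 n, (w - ((b k : ℂ))⁻¹))
        * (∏ k ∈ Finset.Icc 1 m,
            ((1 - (a k : ℂ) * (b (i.1 + 1) : ℂ)) / (1 - (a k : ℂ) / z)))
        * ∏ k ∈ Finset.Icc (m + 1) M,
            ((1 - (a k : ℂ) * (b (j.1 + 1) : ℂ)) / (1 - (a k : ℂ) / w))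

/-! ### Cauchy–Binet over weakly increasing tuples -/

/-- **Cauchy–Binet.** The sum runs over weakly increasing tuples; a tuple with a repeated entry
contributes zero, so it does not matter that the inequalities are not strict. -/
theorem cauchyBinet_monotone {N : ℕ} (S : Finset ℤ) (f g : Fin N → ℤ → ℂ) :
    Matrix.det (Matrix.of fun i j : Fin N => ∑ s ∈ S, f i s * g j s) =
      ∑ y ∈ (Fintype.piFinset fun _ : Fin N => S) with Monotone y,
        Matrix.det (Matrix.of fun i j : Fin N => f i (y j)) *
          Matrix.det (Matrix.of fun i j : Fin N => g j (y i)) := by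
  have expand : Matrix.det (Matrix.of fun i j : Fin N => ∑ s ∈ S, f i s * g j s) =
      ∑ y ∈ Fintype.piFinset fun _ : Fin N => S,
        Matrix.det (Matrix.of fun i j : Fin N => f i (y j)) * ∏ j, g j (y j) := by
    simp only [Matrix.det_apply', Matrix.of_apply, Finset.prod_univ_sum, Finset.mul_sum,
      Finset.sum_mul]
    rw [Finset.sum_comm]
    simp only [Finset.prod_mul_distrib, mul_assoc]
  have vanish : ∀ y : Fin N → ℤ, ¬ Function.Injective y →
      Matrix.det (Matrix.of fun i j : Fin N => f i (y j)) = 0 := by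
    intro y hy
    simp only [Function.Injective, not_forall] at hy
    obtain ⟨p, q, hpq, hne⟩ := hy
    exact Matrix.det_zero_of_column_eq hne (fun i => by simp [hpq])
  rw [expand]
  have lhs : ∑ y ∈ (Fintype.piFinset fun _ : Fin N => S) with Function.Injective y,
      Matrix.det (Matrix.of fun i j : Fin N => f i (y j)) * ∏ j, g j (y j) =
      ∑ y ∈ Fintype.piFinset fun _ : Fin N => S,
        Matrix.det (Matrix.of fun i j : Fin N => f i (y j)) * ∏ j, g j (y j) := by
    apply Finset.sum_filter_of_ne
    intro y _ hne
    by_contra hy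
    exact hne (by rw [vanish y hy, zero_mul])
  have rhs : ∑ y ∈ (Fintype.piFinset fun _ : Fin N => S) with StrictMono y,
        Matrix.det (Matrix.of fun i j : Fin N => f i (y j)) *
          Matrix.det (Matrix.of fun i j : Fin N => g j (y i)) =
      ∑ y ∈ (Fintype.piFinset fun _ : Fin N => S) with Monotone y,
        Matrix.det (Matrix.of fun i j : Fin N => f i (y j)) *
          Matrix.det (Matrix.of fun i j : Fin N => g j (y i)) := by
    apply Finset.sum_subset
    · intro y hy
      rw [Finset.mem_filter] at hy ⊢
      exact ⟨hy.1, hy.2.monotone⟩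
    · intro y hy hy'
      rw [Finset.mem_filter] at hy hy'
      rw [vanish y (fun hinj => hy' ⟨hy.1, hy.2.strictMono_of_injective hinj⟩), zero_mul]
  rw [← lhs, ← rhs]
  have unfoldDet : ∀ y : Fin N → ℤ, Matrix.det (Matrix.of fun i j : Fin N => f i (y j)) *
          Matrix.det (Matrix.of fun i j : Fin N => g j (y i)) =
      ∑ σ : Equiv.Perm (Fin N), Matrix.det (Matrix.of fun i j : Fin N => f i ((y ∘ σ) j)) *
        ∏ j, g j ((y ∘ σ) j) := by
    intro y
    have hperm : ∀ σ : Equiv.Perm (Fin N),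
        Matrix.det (Matrix.of fun i j : Fin N => f i ((y ∘ σ) j)) =
          (Equiv.Perm.sign σ : ℂ) * Matrix.det (Matrix.of fun i j : Fin N => f i (y j)) :=
      fun σ => Matrix.det_permute' σ (Matrix.of fun i j : Fin N => f i (y j))
    rw [Matrix.det_apply' (Matrix.of fun i j : Fin N => g j (y i)), Finset.mul_sum]
    refine Finset.sum_congr rfl fun σ _ => ?_
    rw [hperm]
    simp only [Matrix.of_apply, Function.comp]
    ring
  rw [Finset.sum_congr rfl (fun y _ => unfoldDet y), ← Finset.sum_product']
  symm
  refine Finset.sum_bij (fun p _ => p.1 ∘ p.2) ?_ ?_ ?_ (fun _ _ => rfl)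
  · rintro ⟨y, σ⟩ hp
    simp only [Finset.mem_product, Finset.mem_filter, Fintype.mem_piFinset, Finset.mem_univ,
      and_true] at hp ⊢
    exact ⟨fun j => hp.1 _, hp.2.injective.comp σ.injective⟩
  · rintro ⟨y, σ⟩ hp ⟨z, τ⟩ hq heq
    simp only [Finset.mem_product, Finset.mem_filter, Finset.mem_univ, and_true] at hp hq heq
    have hr : Set.range y = Set.range z := by
      rw [← σ.surjective.range_comp y, ← τ.surjective.range_comp z, heq]
    have hyz : y = z := (hp.2.range_inj hq.2).mp hr
    subst hyz
    have : σ = τ := Equiv.ext fun j => hp.2.injective (congrFun heq j)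
    rw [this]
  · intro y hy
    simp only [Finset.mem_filter, Fintype.mem_piFinset] at hy
    refine ⟨(y ∘ Tuple.sort y, (Tuple.sort y)⁻¹), ?_, ?_⟩
    · simp only [Finset.mem_product, Finset.mem_filter, Fintype.mem_piFinset, Finset.mem_univ,
        and_true]
      exact ⟨fun j => hy.1 _, (Tuple.monotone_sort y).strictMono_of_injective
        (hy.2.comp (Tuple.sort y).injective)⟩
    · ext j
      simp

/-! ### Laurent coefficients of functions analytic near infinity -/

/-- The contour integral `(1/2πi) ∮_{|z|=R} z^{x-1} G(z) dz`, i.e. the coefficient of `z^{-x}` in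
the Laurent expansion of `G` at infinity. -/
noncomputable def laurentCoeff (G : ℂ → ℂ) (R : ℝ) (x : ℤ) : ℂ :=
  (2 * (Real.pi : ℂ) * Complex.I)⁻¹ * ∮ z in C(0, R), z ^ (x - 1) * G z

/-- `G` is analytic on `|z| > ρ` and has at most a pole at infinity. -/
def MeroAtInfty (ρ : ℝ) (G : ℂ → ℂ) : Prop :=
  (∀ z : ℂ, ρ < ‖z‖ → DifferentiableAt ℂ G z) ∧
    ∃ D : ℕ, G =O[Bornology.cobounded ℂ] fun z => z ^ D

namespace MeroAtInfty

variable {ρ R : ℝ} {G F : ℂ → ℂ}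

theorem mul (hG : MeroAtInfty ρ G) (hF : MeroAtInfty ρ F) :
    MeroAtInfty ρ fun z => G z * F z := by
  obtain ⟨D, hD⟩ := hG.2
  obtain ⟨E, hE⟩ := hF.2
  exact ⟨fun z hz => (hG.1 z hz).mul (hF.1 z hz), D + E, by simpa only [pow_add] using hD.mul hE⟩

theorem one : MeroAtInfty ρ fun _ => 1 :=
  ⟨fun _ _ => differentiableAt_const _, 0, by simpa using Asymptotics.isBigO_refl (fun _ : ℂ => (1 : ℂ)) _⟩

theorem prod (s : Finset ℕ) (F : ℕ → ℂ → ℂ) (h : ∀ k ∈ s, MeroAtInfty ρ (F k)) :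
    MeroAtInfty ρ fun z => ∏ k ∈ s, F k z := by
  induction s using Finset.induction_on with
  | empty => simpa using one
  | insert k s hk ih =>
    simp only [Finset.prod_insert hk]
    exact (h k (Finset.mem_insert_self _ _)).mul
      (ih fun l hl => h l (Finset.mem_insert_of_mem hl))

theorem sub_const (c : ℂ) : MeroAtInfty ρ fun z => z - c := by
  refine ⟨fun z _ => differentiableAt_id.sub_const c, 1, ?_⟩
  simp only [pow_one]
  refine (Asymptotics.isBigO_refl _ _).sub ?_
  exact (Asymptotics.isLittleO_const_id_cobounded c).isBigO

theorem inv_sub_const {c : ℂ} (hc : ‖c‖ ≤ ρ) : MeroAtInfty ρ fun z => (z - c)⁻¹ := by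
  refine ⟨fun z hz => (differentiableAt_id.sub_const c).inv ?_, 0, ?_⟩
  · intro h0
    have : z = c := sub_eq_zero.mp h0
    rw [this] at hz
    linarith
  · have h1 : Filter.Tendsto (fun z : ℂ => z - c) (Bornology.cobounded ℂ)
        (Bornology.cobounded ℂ) := tendsto_sub_const_cobounded c
    simpa using (Filter.tendsto_inv₀_cobounded.comp h1).isBigO_one ℂ

theorem inv_one_sub_div {c : ℂ} (hρ : 0 < ρ) (hc : ‖c‖ ≤ ρ) :
    MeroAtInfty ρ fun z => (1 - c / z)⁻¹ := by
  refine ⟨fun z hz => ?_, 0, ?_⟩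
  · have hz0 : z ≠ 0 := norm_pos_iff.mp (hρ.trans hz)
    refine DifferentiableAt.inv ?_ ?_
    · exact (differentiableAt_const _).sub ((differentiableAt_const _).div differentiableAt_id hz0)
    · intro h0
      have : c = z := by
        rw [sub_eq_zero, eq_comm, div_eq_one_iff_eq hz0] at h0
        exact h0
      rw [this] at hc
      linarith
  · have h1 : Filter.Tendsto (fun z : ℂ => (1 - c / z)⁻¹) (Bornology.cobounded ℂ) (nhds 1) := by
      have h2 : Filter.Tendsto (fun z : ℂ => c / z) (Bornology.cobounded ℂ) (nhds 0) := by
        simpa [div_eq_mul_inv] using (Filter.tendsto_inv₀_cobounded (α := ℂ)).const_mul c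
      simpa using (h2.const_sub 1).inv₀ (by simp)
    simpa using h1.isBigO_one ℂ

theorem continuous_circleMap (hG : MeroAtInfty ρ G) (hρ : 0 < ρ) (hR : ρ < R) :
    Continuous fun t => G (circleMap 0 R t) := by
  rw [continuous_iff_continuousAt]
  intro t
  refine ContinuousAt.comp (f := circleMap 0 R) (hG.1 _ ?_).continuousAt (_root_.continuous_circleMap 0 R).continuousAt
  simpa [abs_of_pos (hρ.trans hR)] using hR

theorem continuousOn_integrand (hG : MeroAtInfty ρ G) (hρ : 0 < ρ) (e : ℤ) :
    ContinuousOn (fun z => z ^ e * G z) {z | ρ < ‖z‖} := by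
  intro z hz
  have hz0 : z ≠ 0 := norm_pos_iff.mp (hρ.trans hz)
  exact ((continuousAt_zpow₀ z e (Or.inl hz0)).mul (hG.1 z hz).continuousAt).continuousWithinAt

theorem circleIntegrable (hG : MeroAtInfty ρ G) (hρ : 0 < ρ) (hR : ρ < R) (e : ℤ) :
    CircleIntegrable (fun z => z ^ e * G z) 0 R := by
  refine ContinuousOn.circleIntegrable (hρ.trans hR).le
    ((hG.continuousOn_integrand hρ e).mono ?_)
  intro z hz
  simp only [mem_sphere_iff_norm, sub_zero] at hz
  simpa [hz] using hR

theorem exists_bound (hG : MeroAtInfty ρ G) (hR : ρ < R) :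
    ∃ C, 0 ≤ C ∧ ∀ z : ℂ, ‖z‖ = R → ‖G z‖ ≤ C := by
  have hc : ContinuousOn G (Metric.sphere 0 R) := fun z hz =>
    (hG.1 z (by simp only [mem_sphere_iff_norm, sub_zero] at hz; rwa [hz])).continuousAt.continuousWithinAt
  obtain ⟨C, hC⟩ := (isCompact_sphere (0 : ℂ) R).exists_bound_of_continuousOn hc
  exact ⟨max C 0, le_max_right _ _, fun z hz => (hC z (by simpa using hz)).trans (le_max_left _ _)⟩

/-- Cauchy's theorem on an annulus. -/
theorem laurentCoeff_eq (hG : MeroAtInfty ρ G) (hρ : 0 < ρ) {R R' : ℝ} (hR : ρ < R)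
    (hR' : ρ < R') (x : ℤ) : laurentCoeff G R x = laurentCoeff G R' x := by
  wlog hle : R ≤ R' generalizing R R'
  · exact (this hR' hR (le_of_not_ge hle)).symm
  unfold laurentCoeff
  congr 1
  symm
  refine Complex.circleIntegral_eq_of_differentiable_on_annulus_off_countable (hρ.trans hR) hle
    Set.countable_empty ((hG.continuousOn_integrand hρ _).mono ?_) ?_
  · rintro z ⟨-, hz⟩
    simp only [Metric.mem_ball, dist_zero_right, not_lt] at hz
    exact hR.trans_le hz
  · rintro z ⟨⟨-, hz⟩, -⟩
    simp only [Metric.mem_closedBall, dist_zero_right, not_le] at hz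
    have hz1 : ρ < ‖z‖ := hR.trans hz
    exact (differentiableAt_zpow.mpr (Or.inl (norm_pos_iff.mp (hρ.trans hz1)))).mul (hG.1 z hz1)

/-- Only finitely many positive powers of `z` occur in the expansion at infinity: push the contour
to infinity. -/
theorem laurentCoeff_eq_zero (hG : MeroAtInfty ρ G) (hρ : 0 < ρ) (hR : ρ < R) :
    ∃ x₀ : ℤ, ∀ x ≤ x₀, laurentCoeff G R x = 0 := by
  obtain ⟨D, hD⟩ := hG.2
  obtain ⟨C, hC⟩ := hD.bound
  rw [← comap_norm_atTop, Filter.eventually_comap] at hC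
  refine ⟨-D - 1, fun x hx => ?_⟩
  have key : ∀ᶠ r : ℝ in Filter.atTop, ‖laurentCoeff G R x‖ ≤ C * r⁻¹ := by
    filter_upwards [hC, Filter.eventually_gt_atTop ρ, Filter.eventually_ge_atTop 1]
      with r hCr hr hr1
    have hr0 : 0 < r := hρ.trans hr
    rw [hG.laurentCoeff_eq hρ hR hr]
    have hb : ∀ z ∈ Metric.sphere (0 : ℂ) r, ‖z ^ (x - 1) * G z‖ ≤ C * (r⁻¹ * r⁻¹) := by
      intro z hz
      have hz' : ‖z‖ = r := by simpa using hz
      have h1 := hCr z hz'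
      rw [norm_pow, hz'] at h1
      rw [norm_mul, norm_zpow, hz']
      have hC0 : 0 ≤ C := nonneg_of_mul_nonneg_left ((norm_nonneg _).trans h1) (by positivity)
      calc r ^ (x - 1) * ‖G z‖ ≤ r ^ (x - 1) * (C * r ^ D) := by gcongr
        _ = C * r ^ (x - 1 + D) := by rw [zpow_add₀ hr0.ne', zpow_natCast]; ring
        _ ≤ C * r ^ (-2 : ℤ) := by
            gcongr
            linarith
        _ = C * (r⁻¹ * r⁻¹) := by
            rw [zpow_neg]; norm_cast; rw [sq, mul_inv]
    have h2 := circleIntegral.norm_two_pi_i_inv_smul_integral_le_of_norm_le_const hr0.le hb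
    rw [smul_eq_mul] at h2
    calc ‖laurentCoeff G r x‖ ≤ r * (C * (r⁻¹ * r⁻¹)) := h2
      _ = C * r⁻¹ := by field_simp
  have hlim : Filter.Tendsto (fun r : ℝ => C * r⁻¹) Filter.atTop (nhds 0) := by
    simpa using tendsto_inv_atTop_zero.const_mul C
  exact norm_le_zero_iff.mp (ge_of_tendsto hlim key)

end MeroAtInfty

/-! ### The operators `∇(b)` and `∇(b)⁻¹` on Laurent coefficients -/

theorem nabla_laurentCoeff {ρ R : ℝ} {G : ℂ → ℂ} (hG : MeroAtInfty ρ G) (hρ : 0 < ρ)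
    (hR : ρ < R) (b : ℝ) :
    nabla b (laurentCoeff G R) = laurentCoeff (fun z => (z - (b : ℂ)⁻¹) * G z) R := by
  funext x
  simp only [nabla, laurentCoeff]
  have hint : CircleIntegrable (fun z => (b : ℂ)⁻¹ * (z ^ (x - 1) * G z)) 0 R :=
    (hG.circleIntegrable hρ hR (x - 1)).const_smul
  rw [mul_left_comm, ← mul_sub, ← circleIntegral.integral_const_mul,
    ← circleIntegral.integral_sub (hG.circleIntegrable hρ hR _) hint]
  congr 1
  refine circleIntegral.integral_congr (hρ.trans hR).le fun z hz => ?_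
  have hz' : ‖z‖ = R := by simpa using hz
  have hz0 : z ≠ 0 := norm_pos_iff.mp (by rw [hz']; exact hρ.trans hR)
  have : z ^ (x + 1 - 1) = z ^ (x - 1) * z := by
    rw [← zpow_add_one₀ hz0]; congr 1; ring
  simp only [this]
  ring

/-- `∇(b)⁻¹` is a left inverse of `∇(b)` on functions vanishing near `-∞`: the series telescopes. -/
theorem nablaInv_nabla {b : ℝ} {f : ℤ → ℂ} {x₀ : ℤ} (hf : ∀ x ≤ x₀, f x = 0) :
    nablaInv b (nabla b f) = f := by
  funext x
  simp only [nablaInv, nabla]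
  have hv : ∀ k : ℕ, (x - x₀).toNat ≤ k → f (x - k) = 0 := fun k hk => hf _ (by omega)
  rw [tsum_eq_sum (s := Finset.range (x - x₀).toNat) (by
    intro k hk
    have hk' : (x - x₀).toNat ≤ k := by simpa using hk
    rw [show x - 1 - (k : ℤ) + 1 = x - k by ring, hv k hk',
      show x - 1 - (k : ℤ) = x - ((k + 1 : ℕ) : ℤ) by push_cast; ring, hv (k + 1) (by omega)]
    simp)]
  have tele : ∀ K : ℕ, ∑ k ∈ Finset.range K,
      (b : ℂ) ^ (-(k : ℤ)) * (f (x - 1 - k + 1) - (b : ℂ)⁻¹ * f (x - 1 - k)) =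
      f x - (b : ℂ)⁻¹ ^ K * f (x - K) := by
    intro K
    induction K with
    | zero => simp
    | succ K ih =>
      rw [Finset.sum_range_succ, ih, show x - 1 - (K : ℤ) + 1 = x - K by ring,
        show x - 1 - (K : ℤ) = x - ((K + 1 : ℕ) : ℤ) by push_cast; ring, zpow_neg, zpow_natCast,
        ← inv_pow]
      ring
  rw [tele, hv _ le_rfl, mul_zero, sub_zero]

theorem nablaInv_laurentCoeff {ρ R : ℝ} {G : ℂ → ℂ} (hG : MeroAtInfty ρ G) (hρ : 0 < ρ)
    (hR : ρ < R) {b : ℝ} (hb : ‖(b : ℂ)⁻¹‖ ≤ ρ) :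
    nablaInv b (laurentCoeff G R) = laurentCoeff (fun z => (z - (b : ℂ)⁻¹)⁻¹ * G z) R := by
  have hG' := (MeroAtInfty.inv_sub_const hb).mul hG
  obtain ⟨x₀, hx₀⟩ := hG'.laurentCoeff_eq_zero hρ hR
  rw [← nablaInv_nabla (b := b) hx₀, nabla_laurentCoeff hG' hρ hR]
  congr 1
  funext x
  unfold laurentCoeff
  congr 1
  refine circleIntegral.integral_congr (hρ.trans hR).le fun z hz => ?_
  have hz' : ‖z‖ = R := by simpa using hz
  have hne : z - (b : ℂ)⁻¹ ≠ 0 := by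
    intro h0
    rw [sub_eq_zero] at h0
    rw [← h0, hz'] at hb
    linarith
  simp only [mul_inv_cancel_left₀ hne]

theorem nablaInvIter_laurentCoeff {ρ R : ℝ} {G : ℂ → ℂ} (hG : MeroAtInfty ρ G) (hρ : 0 < ρ)
    (hR : ρ < R) (b : ℕ → ℝ) (i : ℕ) (hb : ∀ k ∈ Finset.Icc 1 i, ‖(b k : ℂ)⁻¹‖ ≤ ρ) :
    nablaInvIter b i (laurentCoeff G R) =
      laurentCoeff (fun z => (∏ k ∈ Finset.Icc 1 i, (z - (b k : ℂ)⁻¹)⁻¹) * G z) R := by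
  induction i with
  | zero => simp [nablaInvIter]
  | succ i ih =>
    have hb' : ∀ k ∈ Finset.Icc 1 i, ‖(b k : ℂ)⁻¹‖ ≤ ρ := fun k hk =>
      hb k (Finset.Icc_subset_Icc_right (Nat.le_succ i) hk)
    simp only [nablaInvIter]
    rw [ih hb', nablaInv_laurentCoeff ((MeroAtInfty.prod _ _ fun k hk =>
      MeroAtInfty.inv_sub_const (hb' k hk)).mul hG) hρ hR (hb (i + 1) (by simp))]
    congr 1
    funext z
    rw [Finset.prod_Icc_succ_top (by omega)]
    ring

theorem nablaIter_laurentCoeff {ρ R : ℝ} {G : ℂ → ℂ} (hG : MeroAtInfty ρ G) (hρ : 0 < ρ)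
    (hR : ρ < R) (b : ℕ → ℝ) (j : ℕ) :
    nablaIter b j (laurentCoeff G R) =
      laurentCoeff (fun z => (∏ k ∈ Finset.Icc 1 j, (z - (b k : ℂ)⁻¹)) * G z) R := by
  induction j with
  | zero => simp [nablaIter]
  | succ j ih =>
    simp only [nablaIter]
    rw [ih, nabla_laurentCoeff ((MeroAtInfty.prod _ _ fun k _ =>
      MeroAtInfty.sub_const _).mul hG) hρ hR]
    congr 1
    funext z
    rw [Finset.prod_Icc_succ_top (by omega)]
    ring

/-- The symbol of `∇(b_{(i,j]})` applied to the product `∏_{ℓ<k≤m} (1 - a_k/z)⁻¹`. -/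
noncomputable def symb (a b : ℕ → ℝ) (i j ℓ m : ℕ) (z : ℂ) : ℂ :=
  ((∏ k ∈ Finset.Icc 1 j, (z - (b k : ℂ)⁻¹)) / ∏ k ∈ Finset.Icc 1 i, (z - (b k : ℂ)⁻¹)) *
    ∏ k ∈ Finset.Icc (ℓ + 1) m, (1 - (a k : ℂ) / z)⁻¹

theorem meroAtInfty_symb {ρ : ℝ} (hρ : 0 < ρ) (a b : ℕ → ℝ) {i j ℓ m : ℕ}
    (hb : ∀ k ∈ Finset.Icc 1 i, ‖(b k : ℂ)⁻¹‖ ≤ ρ)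
    (ha : ∀ k ∈ Finset.Icc (ℓ + 1) m, ‖(a k : ℂ)‖ ≤ ρ) : MeroAtInfty ρ (symb a b i j ℓ m) := by
  have h := ((MeroAtInfty.prod (Finset.Icc 1 j) (fun k z => z - (b k : ℂ)⁻¹) fun k _ =>
    MeroAtInfty.sub_const (ρ := ρ) _).mul (MeroAtInfty.prod _ (fun k z => (z - (b k : ℂ)⁻¹)⁻¹)
      fun k hk => MeroAtInfty.inv_sub_const (hb k hk))).mul
    (MeroAtInfty.prod _ (fun k z => (1 - (a k : ℂ) / z)⁻¹)
      fun k hk => MeroAtInfty.inv_one_sub_div hρ (ha k hk))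
  convert h using 2 with z
  simp only [symb, div_eq_mul_inv, Finset.prod_inv_distrib]

theorem nablaRange_wFun {ρ R : ℝ} (hρ : 0 < ρ) (hR : ρ < R) (a b : ℕ → ℝ) {i j ℓ m : ℕ} (p : ℕ)
    (hb : ∀ k ∈ Finset.Icc 1 i, ‖(b k : ℂ)⁻¹‖ ≤ ρ)
    (ha : ∀ k ∈ Finset.Icc (ℓ + 1) m, ‖(a k : ℂ)‖ ≤ ρ) (x : ℤ) :
    nablaRange b i j (wFun a b R p ℓ m) x =
      (∏ k ∈ Finset.Icc (ℓ + 1) m, (1 - (a k : ℂ) * (b p : ℂ))) *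
        laurentCoeff (symb a b i j ℓ m) R x := by
  set α : ℂ := ∏ k ∈ Finset.Icc (ℓ + 1) m, (1 - (a k : ℂ) * (b p : ℂ)) with hα
  have hconst : MeroAtInfty ρ fun _ => α :=
    ⟨fun _ _ => differentiableAt_const _, 0, by
      simpa using Asymptotics.isBigO_const_const α (one_ne_zero (α := ℂ)) (Bornology.cobounded ℂ)⟩
  have hP : MeroAtInfty ρ fun z => α * ∏ k ∈ Finset.Icc (ℓ + 1) m, (1 - (a k : ℂ) / z)⁻¹ :=
    hconst.mul (MeroAtInfty.prod _ (fun k z => (1 - (a k : ℂ) / z)⁻¹)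
      fun k hk => MeroAtInfty.inv_one_sub_div hρ (ha k hk))
  have hw : wFun a b R p ℓ m = laurentCoeff
      (fun z => α * ∏ k ∈ Finset.Icc (ℓ + 1) m, (1 - (a k : ℂ) / z)⁻¹) R := by
    funext y
    simp only [wFun, laurentCoeff, div_eq_mul_inv, Finset.prod_mul_distrib, hα]
  rw [nablaRange, hw, nablaInvIter_laurentCoeff hP hρ hR b i hb, nablaIter_laurentCoeff
    ((MeroAtInfty.prod _ _ fun k hk => MeroAtInfty.inv_sub_const (hb k hk)).mul hP) hρ hR]
  simp only [laurentCoeff]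
  rw [mul_left_comm α, ← circleIntegral.integral_const_mul α]
  congr 2
  funext z
  simp only [symb, div_eq_mul_inv, Finset.prod_inv_distrib]
  ring

/-! ### The double contour integral -/

/-- The double contour integral
`(2πi)⁻² ∮_{|z|=R₁} ∮_{|w|=R₂} z^{h-1-u} w^{H-h} (z-w)⁻¹ P(z) Q(w) dw dz`. -/
noncomputable def dblIntegral (P Q : ℂ → ℂ) (R₁ R₂ : ℝ) (u H h : ℤ) : ℂ :=
  (2 * (Real.pi : ℂ) * Complex.I)⁻¹ ^ 2 *
    ∮ z in C(0, R₁), ∮ w in C(0, R₂), z ^ (h - 1 - u) * w ^ (H - h) * (z - w)⁻¹ * P z * Q w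

section DoubleIntegral

variable {ρ R₁ R₂ : ℝ} {P Q : ℂ → ℂ}

theorem continuous_dblIntegrand (hρ : 0 < ρ) (h₁ : ρ < R₁) (h₂ : ρ < R₂) (hne : R₁ ≠ R₂)
    (hP : MeroAtInfty ρ P) (hQ : MeroAtInfty ρ Q) (d e : ℤ) :
    Continuous fun p : ℝ × ℝ => circleMap 0 R₁ p.1 ^ d * circleMap 0 R₂ p.2 ^ e *
      (circleMap 0 R₁ p.1 - circleMap 0 R₂ p.2)⁻¹ * P (circleMap 0 R₁ p.1) *
        Q (circleMap 0 R₂ p.2) := by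
  have hR₁ := hρ.trans h₁
  have hR₂ := hρ.trans h₂
  have c₁ : Continuous fun p : ℝ × ℝ => circleMap 0 R₁ p.1 :=
    (continuous_circleMap 0 R₁).comp continuous_fst
  have c₂ : Continuous fun p : ℝ × ℝ => circleMap 0 R₂ p.2 :=
    (continuous_circleMap 0 R₂).comp continuous_snd
  refine ((((c₁.zpow₀ d fun p => Or.inl ?_).mul (c₂.zpow₀ e fun p => Or.inl ?_)).mul
    ((c₁.sub c₂).inv₀ fun p => ?_)).mul ((hP.continuous_circleMap hρ h₁).comp continuous_fst)).mul
      ((hQ.continuous_circleMap hρ h₂).comp continuous_snd)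
  · exact circleMap_ne_center hR₁.ne'
  · exact circleMap_ne_center hR₂.ne'
  · intro h0
    have := congrArg norm (sub_eq_zero.mp h0)
    rw [norm_circleMap_zero, norm_circleMap_zero, abs_of_pos hR₁, abs_of_pos hR₂] at this
    exact hne this

theorem circleIntegrable_inner (hρ : 0 < ρ) (h₁ : ρ < R₁) (h₂ : ρ < R₂) (hne : R₁ ≠ R₂)
    (hP : MeroAtInfty ρ P) (hQ : MeroAtInfty ρ Q) (d e : ℤ) {z : ℂ} (hz : ‖z‖ = R₁) :
    CircleIntegrable (fun w => z ^ d * w ^ e * (z - w)⁻¹ * P z * Q w) 0 R₂ := by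
  obtain ⟨t, rfl⟩ : z ∈ Set.range (circleMap 0 R₁) := by
    rw [range_circleMap]
    simp [hz, abs_of_pos (hρ.trans h₁)]
  exact ((continuous_dblIntegrand hρ h₁ h₂ hne hP hQ d e).comp
    (continuous_const.prodMk continuous_id)).intervalIntegrable _ _

theorem circleIntegrable_outer (hρ : 0 < ρ) (h₁ : ρ < R₁) (h₂ : ρ < R₂) (hne : R₁ ≠ R₂)
    (hP : MeroAtInfty ρ P) (hQ : MeroAtInfty ρ Q) (d e : ℤ) :
    CircleIntegrable (fun z => ∮ w in C(0, R₂), z ^ d * w ^ e * (z - w)⁻¹ * P z * Q w) 0 R₁ := by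
  refine Continuous.intervalIntegrable ?_ _ _
  refine intervalIntegral.continuous_parametric_intervalIntegral_of_continuous' ?_ _ _
  simp only [deriv_circleMap, smul_eq_mul]
  exact (((continuous_circleMap 0 R₂).comp continuous_snd).mul continuous_const).mul
    (continuous_dblIntegrand hρ h₁ h₂ hne hP hQ d e)

/-- Incrementing `h` multiplies the integrand by `z / w`, and the factor `z - w` in the difference
cancels the singular kernel, so that the two integrals separate. -/
theorem dblIntegral_succ_sub (hρ : 0 < ρ) (h₁ : ρ < R₁) (h₂ : ρ < R₂) (hne : R₁ ≠ R₂)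
    (hP : MeroAtInfty ρ P) (hQ : MeroAtInfty ρ Q) (u H h : ℤ) :
    dblIntegral P Q R₁ R₂ u H (h + 1) - dblIntegral P Q R₁ R₂ u H h =
      laurentCoeff P R₁ (h - u) * laurentCoeff Q R₂ (H - h) := by
  have hR₁ := hρ.trans h₁
  have hR₂ := hρ.trans h₂
  unfold dblIntegral laurentCoeff
  rw [← mul_sub, ← circleIntegral.integral_sub
    (circleIntegrable_outer hρ h₁ h₂ hne hP hQ _ _) (circleIntegrable_outer hρ h₁ h₂ hne hP hQ _ _)]
  have inner : ∀ z ∈ Metric.sphere (0 : ℂ) R₁,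
      ((∮ w in C(0, R₂), z ^ (h + 1 - 1 - u) * w ^ (H - (h + 1)) * (z - w)⁻¹ * P z * Q w) -
        ∮ w in C(0, R₂), z ^ (h - 1 - u) * w ^ (H - h) * (z - w)⁻¹ * P z * Q w) =
      (∮ w in C(0, R₂), w ^ (H - h - 1) * Q w) * (z ^ (h - u - 1) * P z) := by
    intro z hz
    have hz' : ‖z‖ = R₁ := by simpa using hz
    have hz0 : z ≠ 0 := norm_pos_iff.mp (by rwa [hz'])
    rw [← circleIntegral.integral_sub (circleIntegrable_inner hρ h₁ h₂ hne hP hQ _ _ hz')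
      (circleIntegrable_inner hρ h₁ h₂ hne hP hQ _ _ hz'), mul_comm,
      ← circleIntegral.integral_const_mul]
    refine circleIntegral.integral_congr hR₂.le fun w hw => ?_
    have hw' : ‖w‖ = R₂ := by simpa using hw
    have hw0 : w ≠ 0 := norm_pos_iff.mp (by rwa [hw'])
    have hzw : z - w ≠ 0 := by
      intro h0
      rw [sub_eq_zero] at h0
      exact hne (by rw [← hz', ← hw', h0])
    have e1 : z ^ (h + 1 - 1 - u) = z ^ (h - u - 1) * z := by
      rw [← zpow_add_one₀ hz0]; congr 1; ring
    have e2 : w ^ (H - h) = w ^ (H - h - 1) * w := by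
      rw [← zpow_add_one₀ hw0]; congr 1; ring
    have e3 : z ^ (h - 1 - u) = z ^ (h - u - 1) := by congr 1; ring
    have e4 : w ^ (H - (h + 1)) = w ^ (H - h - 1) := by congr 1; ring
    simp only [e1, e2, e3, e4]
    field_simp
  rw [circleIntegral.integral_congr hR₁.le inner, circleIntegral.integral_const_mul]
  ring

/-- The integrand is of size `(R₁/R₂)^h` on the contours. -/
theorem norm_dblIntegral_le (hρ : 0 < ρ) (h₁ : ρ < R₁) (h₂ : ρ < R₂) (hne : R₁ ≠ R₂)
    (hP : MeroAtInfty ρ P) (hQ : MeroAtInfty ρ Q) (u H : ℤ) :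
    ∃ C : ℝ, ∀ h : ℤ, ‖dblIntegral P Q R₁ R₂ u H h‖ ≤ C * (R₁ / R₂) ^ h := by
  have hR₁ := hρ.trans h₁
  have hR₂ := hρ.trans h₂
  obtain ⟨A, hA0, hA⟩ := hP.exists_bound h₁
  obtain ⟨B, hB0, hB⟩ := hQ.exists_bound h₂
  have hd : 0 < |R₁ - R₂| := abs_pos.mpr (sub_ne_zero.mpr hne)
  refine ⟨‖(2 * (Real.pi : ℂ) * Complex.I)⁻¹ ^ 2‖ * (2 * Real.pi * R₁ * (2 * Real.pi * R₂ *
    (R₁ ^ (-1 - u) * R₂ ^ H * |R₁ - R₂|⁻¹ * A * B))), fun h => ?_⟩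
  have hb : ∀ z ∈ Metric.sphere (0 : ℂ) R₁, ∀ w ∈ Metric.sphere (0 : ℂ) R₂,
      ‖z ^ (h - 1 - u) * w ^ (H - h) * (z - w)⁻¹ * P z * Q w‖ ≤
        R₁ ^ (h - 1 - u) * R₂ ^ (H - h) * |R₁ - R₂|⁻¹ * A * B := by
    intro z hz w hw
    have hz' : ‖z‖ = R₁ := by simpa using hz
    have hw' : ‖w‖ = R₂ := by simpa using hw
    have h3 : |R₁ - R₂| ≤ ‖z - w‖ := by
      rw [← hz', ← hw']; exact abs_norm_sub_norm_le z w
    simp only [norm_mul, norm_zpow, norm_inv, hz', hw']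
    have := hA z hz'
    have := hB w hw'
    gcongr
  have h4 := circleIntegral.norm_integral_le_of_norm_le_const hR₁.le fun z hz =>
    circleIntegral.norm_integral_le_of_norm_le_const hR₂.le (hb z hz)
  unfold dblIntegral
  rw [norm_mul, mul_assoc]
  refine (mul_le_mul_of_nonneg_left h4 (norm_nonneg _)).trans (le_of_eq ?_)
  rw [show h - 1 - u = h + (-1 - u) by ring, zpow_add₀ hR₁.ne', sub_eq_add_neg H h,
    zpow_add₀ hR₂.ne', zpow_neg, div_zpow]
  ring

/-- For `|z| > |w|` the double integral is the geometric sum over `y < h`: it tends to zero as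
`h → -∞`, while its increments vanish below `lo`, so it is zero there. -/
theorem sum_Ico_eq_dblIntegral (hρ : 0 < ρ) (h₁ : ρ < R₁) (h₂ : ρ < R₂) (hlt : R₂ < R₁)
    (hP : MeroAtInfty ρ P) (hQ : MeroAtInfty ρ Q) (u H : ℤ) {lo h : ℤ} (hlo : lo ≤ h)
    (hz : ∀ y < lo, laurentCoeff P R₁ (y - u) = 0) :
    ∑ y ∈ Finset.Ico lo h, laurentCoeff P R₁ (y - u) * laurentCoeff Q R₂ (H - y) =
      dblIntegral P Q R₁ R₂ u H h := by
  have hne := hlt.ne'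
  have step := fun y => dblIntegral_succ_sub hρ h₁ h₂ hne hP hQ u H y
  have const : ∀ k : ℕ, dblIntegral P Q R₁ R₂ u H (lo - k) = dblIntegral P Q R₁ R₂ u H lo := by
    intro k
    induction k with
    | zero => simp
    | succ k ih =>
      have := step (lo - (k + 1 : ℕ))
      rw [hz _ (by push_cast; linarith), zero_mul, sub_eq_zero] at this
      rw [← this, ← ih]
      congr 1
      push_cast
      ring
  have zero : dblIntegral P Q R₁ R₂ u H lo = 0 := by
    obtain ⟨C, hC⟩ := norm_dblIntegral_le hρ h₁ h₂ hne hP hQ u H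
    have hR₁ := hρ.trans h₁
    have hR₂ := hρ.trans h₂
    have hlim : Filter.Tendsto (fun k : ℕ => C * (R₁ / R₂) ^ lo * (R₂ / R₁) ^ k) Filter.atTop
        (nhds 0) := by
      simpa using (tendsto_pow_atTop_nhds_zero_of_lt_one (by positivity)
        ((div_lt_one hR₁).mpr hlt)).const_mul (C * (R₁ / R₂) ^ lo)
    refine norm_le_zero_iff.mp (ge_of_tendsto' hlim fun k => ?_)
    rw [← const k]
    refine (hC _).trans (le_of_eq ?_)
    rw [zpow_sub₀ (by positivity), zpow_natCast, ← inv_div R₁ R₂, inv_pow]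
    ring
  induction h, hlo using Int.leInduction with
  | base => simp [zero]
  | succ k hk ih =>
    rw [← Finset.insert_Ico_right_eq_Ico_add_one hk, Finset.sum_insert (by simp), ih, ← step k]
    ring

/-- For `|z| < |w|` the double integral is minus the geometric sum over `y ≥ h`. -/
theorem sum_Ico_eq_neg_dblIntegral (hρ : 0 < ρ) (h₁ : ρ < R₁) (h₂ : ρ < R₂) (hlt : R₁ < R₂)
    (hP : MeroAtInfty ρ P) (hQ : MeroAtInfty ρ Q) (u H : ℤ) {h hi : ℤ} (hhi : h ≤ hi)
    (hz : ∀ y, hi ≤ y → laurentCoeff Q R₂ (H - y) = 0) :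
    ∑ y ∈ Finset.Ico h hi, laurentCoeff P R₁ (y - u) * laurentCoeff Q R₂ (H - y) =
      -dblIntegral P Q R₁ R₂ u H h := by
  have hne := hlt.ne
  have step := fun y => dblIntegral_succ_sub hρ h₁ h₂ hne hP hQ u H y
  have const : ∀ k : ℕ, dblIntegral P Q R₁ R₂ u H (hi + k) = dblIntegral P Q R₁ R₂ u H hi := by
    intro k
    induction k with
    | zero => simp
    | succ k ih =>
      have := step (hi + k)
      rw [hz _ (by linarith), mul_zero, sub_eq_zero] at this
      rw [← ih, ← this]
      congr 1
      push_cast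
      ring
  have zero : dblIntegral P Q R₁ R₂ u H hi = 0 := by
    obtain ⟨C, hC⟩ := norm_dblIntegral_le hρ h₁ h₂ hne hP hQ u H
    have hR₁ := hρ.trans h₁
    have hR₂ := hρ.trans h₂
    have hlim : Filter.Tendsto (fun k : ℕ => C * (R₁ / R₂) ^ hi * (R₁ / R₂) ^ k) Filter.atTop
        (nhds 0) := by
      simpa using (tendsto_pow_atTop_nhds_zero_of_lt_one (by positivity)
        ((div_lt_one hR₂).mpr hlt)).const_mul (C * (R₁ / R₂) ^ hi)
    refine norm_le_zero_iff.mp (ge_of_tendsto' hlim fun k => ?_)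
    rw [← const k]
    refine (hC _).trans (le_of_eq ?_)
    rw [zpow_add₀ (by positivity), zpow_natCast]
    ring
  have tele : ∑ y ∈ Finset.Ico h hi, laurentCoeff P R₁ (y - u) * laurentCoeff Q R₂ (H - y) =
      dblIntegral P Q R₁ R₂ u H hi - dblIntegral P Q R₁ R₂ u H h := by
    clear zero const hz
    induction hi, hhi using Int.leInduction with
    | base => simp
    | succ k hk ih =>
      rw [← Finset.insert_Ico_right_eq_Ico_add_one hk, Finset.sum_insert (by simp), ih, ← step k]
      ring
  rw [tele, zero, zero_sub]

end DoubleIntegral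

/-- The kernel is the double integral of the two symbols, up to factors depending on the row or on
the column only. -/
theorem Lkernel_eq (N : ℕ) (a b : ℕ → ℝ) (x : Fin N → ℤ) (m M n : ℕ) (h H : ℤ) (R₁ R₂ : ℝ)
    (i j : Fin N) (hb : b (i.1 + 1) ≠ 0) (hR₁ : 0 < R₁) :
    Lkernel N a b x m M n h H R₁ R₂ i j =
      ((b (i.1 + 1) : ℂ) ^ (h - 1 - x i) *
        ∏ k ∈ Finset.Icc (0 + 1) m, (1 - (a k : ℂ) * (b (i.1 + 1) : ℂ))) *
      (((b (j.1 + 1) : ℂ) ^ (H - h) *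
        ∏ k ∈ Finset.Icc (m + 1) M, (1 - (a k : ℂ) * (b (j.1 + 1) : ℂ))) *
      dblIntegral (symb a b (i.1 + 1) n 0 m) (symb a b n j.1 m M) R₁ R₂ (x i) H h) := by
  have hb' : (b (i.1 + 1) : ℂ) ≠ 0 := by exact_mod_cast hb
  unfold Lkernel dblIntegral
  rw [mul_left_comm _ ((2 * (Real.pi : ℂ) * Complex.I)⁻¹ ^ 2),
    mul_left_comm _ ((2 * (Real.pi : ℂ) * Complex.I)⁻¹ ^ 2)]
  congr 1
  rw [← circleIntegral.integral_const_mul, ← circleIntegral.integral_const_mul]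
  refine circleIntegral.integral_congr hR₁.le fun z hz => ?_
  have hz0 : z ≠ 0 := norm_pos_iff.mp (by rwa [mem_sphere_zero_iff_norm.mp hz])
  rw [← circleIntegral.integral_const_mul, ← circleIntegral.integral_const_mul]
  congr 1
  funext w
  simp only [symb, mul_zpow, Finset.prod_div_distrib, Finset.prod_inv_distrib]
  rw [sub_eq_add_neg (h - 1) (x i), zpow_add₀ hb', zpow_add₀ hz0]
  ring

/-! ### The sum over the Weyl chamber -/

/-- **Lemma 3.5**: the sum `S` equals `det(θ L₁ - L₂)`. -/
theorem sum_S_eq_det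
    (N : ℕ) (hN : 1 ≤ N)
    (a b : ℕ → ℝ)
    (ha : ∀ i, 1 ≤ i → 0 ≤ a i ∧ a i ≤ 1)
    (hb : ∀ j, 1 ≤ j → j ≤ N → 0 < b j ∧ b j ≤ 1)
    (hab : ∀ i j, 1 ≤ i → 1 ≤ j → j ≤ N → 0 < a i * b j ∧ a i * b j < 1)
    (x : Fin N → ℤ) (hx : Monotone x)
    (m M : ℕ) (hm : 0 < m) (hmM : m < M)
    (n : ℕ) (hn1 : 1 ≤ n) (hnN : n < N)
    (h H : ℤ) (θ : ℂ)
    (R : ℝ) (hR : ∀ k, 1 ≤ k → k ≤ N → 1 / b k < R)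
    (R₁ R₂ R₁' R₂' : ℝ)
    (hR2 : ∀ k, 1 ≤ k → k ≤ N → 1 / b k < R₂) (hR12 : R₂ < R₁)
    (hR1' : ∀ k, 1 ≤ k → k ≤ N → 1 / b k < R₁') (hR12' : R₁' < R₂') :
    (∑' y : {y : Fin N → ℤ // Monotone y},
        (∏ j : Fin N, (((b (j.1 + 1) : ℂ)) ^ (H - 1 - x j)
            * (if y.1 j < h then θ else 1))) *
          Matrix.det (Matrix.of fun i j : Fin N =>
            nablaRange b (i.1 + 1) n (wFun a b R (j.1 + 1) 0 m)
              (y.1 j - x i))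
          * Matrix.det (Matrix.of fun i j : Fin N =>
              nablaRange b n j.1 (wFun a b R (j.1 + 1) m M)
                (H - y.1 i)))
      = Matrix.det (Matrix.of fun i j : Fin N =>
          θ * Lkernel N a b x m M n h H R₁ R₂ i j
            - Lkernel N a b x m M n h H R₁' R₂' i j) := by
  classical
  -- `ρ = max_k 1/b_k` is at least `1`, hence also bounds every `|a_k|`.
  obtain ⟨k₀, hk₀, hmax⟩ := Finset.exists_max_image (Finset.Icc 1 N) (fun k => 1 / b k)
    ⟨1, by simpa using hN⟩
  rw [Finset.mem_Icc] at hk₀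
  obtain ⟨ρ, hρdef⟩ : ∃ ρ, ρ = 1 / b k₀ := ⟨_, rfl⟩
  have hρ1 : 1 ≤ ρ := by
    rw [hρdef]
    exact (one_le_div (hb k₀ hk₀.1 hk₀.2).1).mpr (hb k₀ hk₀.1 hk₀.2).2
  have hρ : 0 < ρ := by linarith
  have hbρ : ∀ i ≤ N, ∀ k ∈ Finset.Icc 1 i, ‖(b k : ℂ)⁻¹‖ ≤ ρ := by
    intro i hi k hk
    rw [Finset.mem_Icc] at hk
    rw [norm_inv, Complex.norm_real, Real.norm_of_nonneg (hb k hk.1 (hk.2.trans hi)).1.le, hρdef,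
      ← one_div]
    exact hmax k (Finset.mem_Icc.mpr ⟨hk.1, hk.2.trans hi⟩)
  have haρ : ∀ l p : ℕ, ∀ k ∈ Finset.Icc (l + 1) p, ‖(a k : ℂ)‖ ≤ ρ := by
    intro l p k hk
    rw [Finset.mem_Icc] at hk
    have hak := ha k (by omega)
    rw [Complex.norm_real, Real.norm_of_nonneg hak.1]
    exact hak.2.trans hρ1
  have hRρ : ρ < R := hρdef ▸ hR k₀ hk₀.1 hk₀.2
  have hR2ρ : ρ < R₂ := hρdef ▸ hR2 k₀ hk₀.1 hk₀.2
  have hR1ρ' : ρ < R₁' := hρdef ▸ hR1' k₀ hk₀.1 hk₀.2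
  have hR1ρ : ρ < R₁ := hR2ρ.trans hR12
  have hR2ρ' : ρ < R₂' := hR1ρ'.trans hR12'
  have hb0 : ∀ i : Fin N, b (i.1 + 1) ≠ 0 := fun i => (hb _ (by omega) (by omega)).1.ne'
  -- Symbols, scalar prefactors and integral representation of the entries.
  set P : Fin N → ℂ → ℂ := fun i => symb a b (i.1 + 1) n 0 m
  set Q : Fin N → ℂ → ℂ := fun j => symb a b n j.1 m M
  set α : Fin N → ℂ := fun i => ∏ k ∈ Finset.Icc (0 + 1) m, (1 - (a k : ℂ) * (b (i.1 + 1) : ℂ))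
  set β : Fin N → ℂ := fun j => ∏ k ∈ Finset.Icc (m + 1) M, (1 - (a k : ℂ) * (b (j.1 + 1) : ℂ))
  have hP : ∀ i, MeroAtInfty ρ (P i) := fun i =>
    meroAtInfty_symb hρ a b (hbρ _ (by omega)) (haρ _ _)
  have hQ : ∀ j, MeroAtInfty ρ (Q j) := fun j =>
    meroAtInfty_symb hρ a b (hbρ _ hnN.le) (haρ _ _)
  have hA : ∀ (i j : Fin N) (y : ℤ), nablaRange b (i.1 + 1) n (wFun a b R (j.1 + 1) 0 m) y =
      α j * laurentCoeff (P i) R y := fun i j y =>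
    nablaRange_wFun hρ hRρ a b (j.1 + 1) (hbρ _ (by omega)) (haρ _ _) y
  have hB : ∀ (j : Fin N) (y : ℤ), nablaRange b n j.1 (wFun a b R (j.1 + 1) m M) y =
      β j * laurentCoeff (Q j) R y := fun j y =>
    nablaRange_wFun hρ hRρ a b (j.1 + 1) (hbρ _ hnN.le) (haρ _ _) y
  -- A finite window `[lo, hi)` containing the supports of all entries.
  choose p hp using fun i => (hP i).laurentCoeff_eq_zero hρ hRρ
  choose q hq using fun j => (hQ j).laurentCoeff_eq_zero hρ hRρ
  obtain ⟨lo, hlo⟩ : ∃ lo : ℤ, lo ≤ h ∧ ∀ i, lo ≤ x i + p i := by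
    obtain ⟨l, hl⟩ := (Set.finite_range fun i => x i + p i).bddBelow
    exact ⟨min l h, min_le_right _ _, fun i => (min_le_left _ _).trans (hl ⟨i, rfl⟩)⟩
  obtain ⟨hi, hhi⟩ : ∃ hi : ℤ, h ≤ hi ∧ ∀ j, H - q j ≤ hi := by
    obtain ⟨l, hl⟩ := (Set.finite_range fun j => H - q j).bddAbove
    exact ⟨max l h, le_max_right _ _, fun j => (hl ⟨j, rfl⟩).trans (le_max_left _ _)⟩
  have hAz : ∀ i, ∀ y < lo, laurentCoeff (P i) R (y - x i) = 0 := fun i y hy =>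
    hp i _ (by linarith [hlo.2 i])
  have hBz : ∀ j, ∀ y, hi ≤ y → laurentCoeff (Q j) R (H - y) = 0 := fun j y hy =>
    hq j _ (by linarith [hhi.2 j])
  let f : Fin N → ℤ → ℂ := fun i y => (if y < h then θ else 1) * laurentCoeff (P i) R (y - x i)
  let g : Fin N → ℤ → ℂ := fun j y => laurentCoeff (Q j) R (H - y)
  -- The entries of the Cauchy–Binet matrix, after freely moving the contours.
  have entry : ∀ i j, ∑ y ∈ Finset.Ico lo hi, f i y * g j y =
      θ * dblIntegral (P i) (Q j) R₁ R₂ (x i) H h -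
        dblIntegral (P i) (Q j) R₁' R₂' (x i) H h := by
    intro i j
    rw [← Finset.Ico_union_Ico_eq_Ico hlo.1 hhi.1,
      Finset.sum_union (Finset.Ico_disjoint_Ico_consecutive lo h hi)]
    have e₁ := sum_Ico_eq_dblIntegral hρ hR1ρ hR2ρ hR12 (hP i) (hQ j) (x i) H hlo.1
      (fun y hy => by rw [(hP i).laurentCoeff_eq hρ hR1ρ hRρ]; exact hAz i y hy)
    have e₂ := sum_Ico_eq_neg_dblIntegral hρ hR1ρ' hR2ρ' hR12' (hP i) (hQ j) (x i) H hhi.1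
      (fun y hy => by rw [(hQ j).laurentCoeff_eq hρ hR2ρ' hRρ]; exact hBz j y hy)
    rw [sub_eq_add_neg, ← e₁, ← e₂, Finset.mul_sum]
    congr 1
    · refine Finset.sum_congr rfl fun y hy => ?_
      rw [(hP i).laurentCoeff_eq hρ hR1ρ hRρ, (hQ j).laurentCoeff_eq hρ hR2ρ hRρ]
      simp only [f, g, if_pos (Finset.mem_Ico.mp hy).2]
      ring
    · refine Finset.sum_congr rfl fun y hy => ?_
      rw [(hP i).laurentCoeff_eq hρ hR1ρ' hRρ, (hQ j).laurentCoeff_eq hρ hR2ρ' hRρ]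
      simp only [f, g, if_neg (not_lt.mpr (Finset.mem_Ico.mp hy).1)]
      ring
  set c : ℂ := (∏ j : Fin N, (b (j.1 + 1) : ℂ) ^ (H - 1 - x j)) * (∏ j, α j) * ∏ j, β j with hc
  have term : ∀ y : Fin N → ℤ,
      (∏ j : Fin N, (((b (j.1 + 1) : ℂ)) ^ (H - 1 - x j)
            * (if y j < h then θ else 1))) *
          Matrix.det (Matrix.of fun i j : Fin N =>
            nablaRange b (i.1 + 1) n (wFun a b R (j.1 + 1) 0 m)
              (y j - x i))
          * Matrix.det (Matrix.of fun i j : Fin N =>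
              nablaRange b n j.1 (wFun a b R (j.1 + 1) m M)
                (H - y i)) =
      c * (Matrix.det (Matrix.of fun i j : Fin N => f i (y j)) *
        Matrix.det (Matrix.of fun i j : Fin N => g j (y i))) := by
    intro y
    simp only [hA, hB, f, g]
    have d₁ := Matrix.det_mul_row α
      (Matrix.of fun i j : Fin N => laurentCoeff (P i) R (y j - x i))
    have d₂ := Matrix.det_mul_row β
      (Matrix.of fun i j : Fin N => laurentCoeff (Q j) R (H - y i))
    have d₃ := Matrix.det_mul_row (fun j => if y j < h then θ else 1)
      (Matrix.of fun i j : Fin N => laurentCoeff (P i) R (y j - x i))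
    simp only [Matrix.of_apply] at d₁ d₂ d₃
    rw [d₁, d₂, d₃, Finset.prod_mul_distrib, hc]
    ring
  simp only [term]
  have outside : ∀ y : Fin N → ℤ, y ∉ (Fintype.piFinset fun _ : Fin N => Finset.Ico lo hi) →
      Matrix.det (Matrix.of fun i j : Fin N => f i (y j)) *
        Matrix.det (Matrix.of fun i j : Fin N => g j (y i)) = 0 := by
    intro y hy
    simp only [Fintype.mem_piFinset, Finset.mem_Ico, not_forall, not_and_or, not_le, not_lt] at hy
    obtain ⟨k, hk | hk⟩ := hy
    · rw [Matrix.det_eq_zero_of_column_eq_zero k (fun i => by simp [f, hAz i _ hk]), zero_mul]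
    · rw [Matrix.det_eq_zero_of_row_eq_zero (A := Matrix.of fun i j : Fin N => g j (y i)) k
        (fun j => hBz j _ hk), mul_zero]
  have hsum : (∑' y : {y : Fin N → ℤ // Monotone y},
      c * (Matrix.det (Matrix.of fun i j : Fin N => f i (y.1 j)) *
        Matrix.det (Matrix.of fun i j : Fin N => g j (y.1 i)))) =
      c * Matrix.det (Matrix.of fun i j : Fin N => ∑ s ∈ Finset.Ico lo hi, f i s * g j s) := by
    rw [cauchyBinet_monotone, Finset.mul_sum]
    refine (tsum_subtype {y : Fin N → ℤ | Monotone y} fun y =>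
      c * (Matrix.det (Matrix.of fun i j : Fin N => f i (y j)) *
        Matrix.det (Matrix.of fun i j : Fin N => g j (y i)))).trans ?_
    rw [tsum_eq_sum (s := Fintype.piFinset fun _ : Fin N => Finset.Ico lo hi), Finset.sum_filter]
    · exact Finset.sum_congr rfl fun y _ => by simp only [Set.indicator_apply, Set.mem_ofPred_eq]
    · intro y hy
      rw [Set.indicator_apply, outside y hy, mul_zero, ite_self]
  rw [hsum]
  simp only [entry]
  have d₄ := Matrix.det_mul_row (fun j : Fin N => (b (j.1 + 1) : ℂ) ^ (H - h) * β j)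
    (Matrix.of fun i j : Fin N => θ * dblIntegral (P i) (Q j) R₁ R₂ (x i) H h -
        dblIntegral (P i) (Q j) R₁' R₂' (x i) H h)
  have d₅ := Matrix.det_mul_column (fun i : Fin N => (b (i.1 + 1) : ℂ) ^ (h - 1 - x i) * α i)
    (Matrix.of fun i j : Fin N => ((b (j.1 + 1) : ℂ) ^ (H - h) * β j) *
      (θ * dblIntegral (P i) (Q j) R₁ R₂ (x i) H h -
        dblIntegral (P i) (Q j) R₁' R₂' (x i) H h))
  simp only [Matrix.of_apply] at d₄ d₅
  rw [d₄] at d₅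
  have hpow : ∏ j : Fin N, (b (j.1 + 1) : ℂ) ^ (H - 1 - x j) =
      (∏ j : Fin N, (b (j.1 + 1) : ℂ) ^ (h - 1 - x j)) * ∏ j : Fin N, (b (j.1 + 1) : ℂ) ^ (H - h) := by
    rw [← Finset.prod_mul_distrib]
    refine Finset.prod_congr rfl fun j _ => ?_
    rw [← zpow_add₀ (by exact_mod_cast hb0 j)]
    congr 1
    ring
  refine Eq.trans ?_ (d₅.symm.trans ?_)
  · rw [hc, hpow, Finset.prod_mul_distrib, Finset.prod_mul_distrib]
    ring
  · congr 1
    ext i j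
    simp only [Matrix.of_apply]
    rw [Lkernel_eq N a b x m M n h H R₁ R₂ i j (hb0 i) (hρ.trans hR1ρ),
      Lkernel_eq N a b x m M n h H R₁' R₂' i j (hb0 i) (hρ.trans hR1ρ')]
    simp only [P, Q, α, β]
    ring
end
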